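/- arXiv:1903.02896 — 3 statements merged into one kernel-verified Lean document; each statement's English description precedes it below -/
import Mathlib

section
/- Let X be a Polish metric space, let T : X → X be a bijection such that T is Lipschitz with constant Λ > 1 and T⁻¹ is Lipschitz, and let μ be an ergodic T-invariant Borel probability measure. Then d̄_μ(x) ≥ h_μ(T)/log Λ for μ-a.e. x ∈ X; equivalently, the lower packing dimension of μ satisfies dim_P^-(μ) ≥ h_μ(T)/log Λ. -/
open Filter MeasureTheory Topology Metric Set
open scoped ENNReal NNReal

noncomputable section
attribute [local instance] Classical.propDecidable

/-- The full (bilateral) shift on the product space `ℤ → M`: `(T x) i = x (i - 1)`. -/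
def fullShift {M : Type*} (x : ℤ → M) : ℤ → M := fun i => x (i - 1)

/-- The metric `d(x,y) = ∑_{n ∈ ℤ} 2^{-|n|} ρ(xₙ,yₙ)/(1 + ρ(xₙ,yₙ))` on `ℤ → M`,
compatible with the product topology. -/
def shiftDist {M : Type*} [MetricSpace M] (x y : ℤ → M) : ℝ :=
  ∑' n : ℤ, (1 / 2 : ℝ) ^ n.natAbs * (dist (x n) (y n) / (1 + dist (x n) (y n)))

/-- Lower local dimension `d̲_μ(x) = liminf_{ε → 0⁺} log μ(B(x,ε)) / log ε` of `μ` at `x`,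
with respect to the distance function `d`; by convention it is `∞` if some ball
centered at `x` has measure zero. -/
def lowerLocalDim {X : Type*} [MeasurableSpace X] (d : X → X → ℝ)
    (μ : Measure X) (x : X) : ℝ≥0∞ :=
  if ∃ ε > 0, μ {y | d x y < ε} = 0 then ⊤
  else liminf (fun ε : ℝ =>
    ENNReal.ofReal (Real.log (μ {y | d x y < ε}).toReal / Real.log ε)) (𝓝[>] (0 : ℝ))

/-- Upper local dimension `d̄_μ(x) = limsup_{ε → 0⁺} log μ(B(x,ε)) / log ε`. -/
def upperLocalDim {X : Type*} [MeasurableSpace X] (d : X → X → ℝ)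
    (μ : Measure X) (x : X) : ℝ≥0∞ :=
  if ∃ ε > 0, μ {y | d x y < ε} = 0 then ⊤
  else limsup (fun ε : ℝ =>
    ENNReal.ofReal (Real.log (μ {y | d x y < ε}).toReal / Real.log ε)) (𝓝[>] (0 : ℝ))

/-- The ratio `log τ_r(x) / (- log r)`, where `τ_r(x) = inf {n ≥ 1 | Tⁿ x ∈ B̄(x,r)}` is the
first return time of `x` to the closed ball `B̄(x,r)`; by convention it is `∞` when the
return time is infinite. -/
def recRatio {X : Type*} (d : X → X → ℝ) (T : X → X) (x : X) (r : ℝ) : ℝ≥0∞ :=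
  if ∃ n : ℕ, 1 ≤ n ∧ d (T^[n] x) x ≤ r then
    ENNReal.ofReal
      (Real.log ((sInf {n : ℕ | 1 ≤ n ∧ d (T^[n] x) x ≤ r} : ℕ) : ℝ) / (- Real.log r))
  else ⊤

/-- Lower recurrence rate `R̲(x) = liminf_{r → 0⁺} log τ_r(x) / (- log r)`. -/
def lowerRecRate {X : Type*} (d : X → X → ℝ) (T : X → X) (x : X) : ℝ≥0∞ :=
  liminf (recRatio d T x) (𝓝[>] (0 : ℝ))

/-- Upper recurrence rate `R̄(x) = limsup_{r → 0⁺} log τ_r(x) / (- log r)`. -/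
def upperRecRate {X : Type*} (d : X → X → ℝ) (T : X → X) (x : X) : ℝ≥0∞ :=
  limsup (recRatio d T x) (𝓝[>] (0 : ℝ))

/-- The ratio `log τ_r(x,y) / (- log r)`, where `τ_r(x,y) = inf {n ≥ 1 | Tⁿ x ∈ B̄(y,r)}` is the
first entrance time of the orbit of `x` into the closed ball `B̄(y,r)`; by convention `∞`
when the entrance time is infinite. -/
def waitRatio {X : Type*} (d : X → X → ℝ) (T : X → X) (x y : X) (r : ℝ) : ℝ≥0∞ :=
  if ∃ n : ℕ, 1 ≤ n ∧ d (T^[n] x) y ≤ r then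
    ENNReal.ofReal
      (Real.log ((sInf {n : ℕ | 1 ≤ n ∧ d (T^[n] x) y ≤ r} : ℕ) : ℝ) / (- Real.log r))
  else ⊤

/-- Lower quantitative waiting time indicator `R̲(x,y)`. -/
def lowerWaitRate {X : Type*} (d : X → X → ℝ) (T : X → X) (x y : X) : ℝ≥0∞ :=
  liminf (waitRatio d T x y) (𝓝[>] (0 : ℝ))

/-- Upper quantitative waiting time indicator `R̄(x,y)`. -/
def upperWaitRate {X : Type*} (d : X → X → ℝ) (T : X → X) (x y : X) : ℝ≥0∞ :=
  limsup (waitRatio d T x y) (𝓝[>] (0 : ℝ))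

/-- The entropy `H(P) = ∑_c -μ(P_c) log μ(P_c)` of the finite measurable partition
`P_c = f ⁻¹ {c}` of `X` induced by a map `f` into a finite set. -/
def partitionEntropy {X F : Type*} [MeasurableSpace X] [Fintype F]
    (μ : Measure X) (f : X → F) : ℝ :=
  ∑ c : F, Real.negMulLog ((μ (f ⁻¹' {c})).toReal)

/-- The Kolmogorov–Sinai (measure-theoretic) entropy `h_μ(T)`: the supremum, over all finite
measurable partitions (coded by measurable maps `f : X → Fin k`), of the limit of
`H(⋁_{i<n} T⁻ⁱ P) / n`. -/
def kolmogorovSinaiEntropy {X : Type*} [MeasurableSpace X] (T : X → X) (μ : Measure X) :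
    ℝ≥0∞ :=
  ⨆ (k : ℕ) (f : X → Fin k) (_ : Measurable f),
    ENNReal.ofReal
      (liminf (fun n : ℕ =>
        partitionEntropy μ (fun x (i : Fin n) => f (T^[(i : ℕ)] x)) / n) atTop)

end

lemma gibbs_aux {F : Type*} [Fintype F] (p q : F → ℝ) (hp : ∀ a, 0 ≤ p a) (hp1 : ∑ a, p a = 1)
    (hq : ∀ a, 0 < q a) (hq1 : ∑ a, q a ≤ 1) :
    ∑ a, Real.negMulLog (p a) ≤ ∑ a, p a * (- Real.log (q a)) := by
  have h : ∀ a, Real.negMulLog (p a) ≤ p a * (- Real.log (q a)) + (q a - p a) := by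
    intro a
    rcases (hp a).eq_or_lt with h0 | h0
    · rw [← h0]; simp [(hq a).le]
    · have h1 := Real.log_le_sub_one_of_pos (div_pos (hq a) h0)
      rw [Real.log_div (hq a).ne' h0.ne'] at h1
      have h2 := mul_le_mul_of_nonneg_left h1 h0.le
      have h3 : p a * (q a / p a - 1) = q a - p a := by field_simp
      rw [h3] at h2
      unfold Real.negMulLog
      linarith
  have := Finset.sum_le_sum (fun a (_ : a ∈ Finset.univ) => h a)
  rw [Finset.sum_add_distrib, Finset.sum_sub_distrib] at this
  linarith

lemma entropy_le_integral {X F : Type*} [MeasurableSpace X] [Fintype F] [MeasurableSpace F]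
    [MeasurableSingletonClass F] (μ : Measure X) [IsProbabilityMeasure μ] (f : X → F)
    (hf : Measurable f) (q : F → ℝ) (hq : ∀ a, 0 < q a) (hq1 : ∑ a, q a ≤ 1) :
    partitionEntropy μ f ≤ ∫ y, - Real.log (q (f y)) ∂μ := by
  have hm : ∀ a, (μ (f ⁻¹' {a})).toReal = (μ.map f).real {a} := by
    intro a
    rw [Measure.real, Measure.map_apply hf (measurableSet_singleton a)]
  have : IsProbabilityMeasure (μ.map f) := Measure.isProbabilityMeasure_map hf.aemeasurable
  have e : ∫ y, - Real.log (q (f y)) ∂μ = ∑ a, (μ.map f).real {a} * (- Real.log (q a)) := by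
    rw [← integral_map (f := fun a => - Real.log (q a)) hf.aemeasurable
      (Measurable.of_discrete).aestronglyMeasurable]
    rw [integral_fintype (Integrable.of_finite)]
    simp
  rw [e]
  unfold partitionEntropy
  simp_rw [hm]
  apply gibbs_aux _ _ (fun _ => measureReal_nonneg) _ hq hq1
  rw [sum_measureReal_singleton]
  simp

lemma cover_aux {X : Type*} [MetricSpace X] [MeasurableSpace X] [BorelSpace X]
    (μ : Measure X) [IsProbabilityMeasure μ] (A : Set X) (r a : ℝ) (ha : 0 < a)
    (h : ∀ x ∈ A, a ≤ μ.real (ball x r)) :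
    ∃ F : Finset X, (F.card : ℝ) * a ≤ 1 ∧ ∀ y ∈ A, ∃ x ∈ F, dist y x < 2 * r := by
  have key : ∀ F : Finset X, (F : Set X) ⊆ A →
      (F : Set X).Pairwise (fun x y => 2 * r ≤ dist x y) → (F.card : ℝ) * a ≤ 1 := by
    intro F hF hs
    have h1 : μ.real (⋃ x ∈ F, ball x r) = ∑ x ∈ F, μ.real (ball x r) := by
      apply measureReal_biUnion_finset
      · intro x hx y hy hxy
        exact ball_disjoint_ball (by linarith [hs hx hy hxy])
      · intro x _; exact measurableSet_ball
      · intro x _; exact measure_ne_top _ _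
    have h2 : ∑ x ∈ F, a ≤ ∑ x ∈ F, μ.real (ball x r) :=
      Finset.sum_le_sum (fun x hx => h x (hF hx))
    rw [Finset.sum_const, nsmul_eq_mul, ← h1] at h2
    exact h2.trans measureReal_le_one
  let N : Set ℕ := {n | ∃ F : Finset X, (F : Set X) ⊆ A ∧
      (F : Set X).Pairwise (fun x y => 2 * r ≤ dist x y) ∧ F.card = n}
  have hN : N.Nonempty := ⟨0, ∅, by simp, by simp, by simp⟩
  have hb : BddAbove N := by
    refine ⟨⌊1 / a⌋₊, ?_⟩
    rintro n ⟨F, h1, h2, rfl⟩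
    apply Nat.le_floor
    rw [le_div_iff₀ ha]
    exact key F h1 h2
  obtain ⟨F, h1, h2, h3⟩ := Nat.sSup_mem hN hb
  refine ⟨F, key F h1 h2, ?_⟩
  intro y hy
  by_contra! hcon
  classical
  by_cases hyF : y ∈ F
  · have h5 := hcon y hyF
    rw [dist_self] at h5
    have h4 := h y hy
    rw [ball_eq_empty.2 (by linarith)] at h4
    simp at h4
    linarith
  · have : (insert y F).card ∈ N := by
      refine ⟨insert y F, ?_, ?_, rfl⟩
      · rw [Finset.coe_insert]; exact Set.insert_subset hy h1
      · rw [Finset.coe_insert]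
        apply h2.insert
        intro z hz _
        exact ⟨hcon z hz, by rw [dist_comm]; exact hcon z hz⟩
    have := le_csSup hb this
    rw [Finset.card_insert_of_notMem hyF] at this
    omega

lemma lusin_aux {X : Type*} [MetricSpace X]
    [CompleteSpace X] [TopologicalSpace.SeparableSpace X]
    [MeasurableSpace X] [BorelSpace X] (μ : Measure X) [IsProbabilityMeasure μ]
    {k : ℕ} (f : X → Fin k) (hf : Measurable f) (δ : ℝ) (hδ : 0 < δ) :
    ∃ K : Set X, MeasurableSet K ∧ μ.real Kᶜ ≤ δ ∧
      ∃ ρ > 0, ∀ w ∈ K, ∀ w' ∈ K, dist w w' < ρ → f w = f w' := by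
  have : SecondCountableTopology X := UniformSpace.secondCountable_of_separable X
  have : PolishSpace X := inferInstance
  obtain ⟨η, hη, hηδ⟩ : ∃ η : ℝ, 0 < η ∧ k * η ≤ δ := by
    refine ⟨δ / (k + 1), by positivity, ?_⟩
    rw [mul_div_assoc', div_le_iff₀ (by positivity)]
    nlinarith
  have hK : ∀ j : Fin k, ∃ K ⊆ f ⁻¹' {j}, IsCompact K ∧ μ (f ⁻¹' {j} \ K) < ENNReal.ofReal η := by
    intro j
    exact (hf (measurableSet_singleton j)).exists_isCompact_sdiff_lt (measure_ne_top _ _)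
      (by simpa using hη)
  choose K hKs hKc hKμ using hK
  refine ⟨⋃ j, K j, MeasurableSet.iUnion fun j => (hKc j).measurableSet, ?_, ?_⟩
  · have hsub : (⋃ j, K j)ᶜ ⊆ ⋃ j, (f ⁻¹' {j} \ K j) := by
      intro x hx
      simp only [mem_compl_iff, mem_iUnion, not_exists] at hx
      exact mem_iUnion.2 ⟨f x, rfl, hx _⟩
    calc μ.real (⋃ j, K j)ᶜ ≤ μ.real (⋃ j, (f ⁻¹' {j} \ K j)) := measureReal_mono hsub
      _ ≤ ∑ j, μ.real (f ⁻¹' {j} \ K j) := measureReal_iUnion_fintype_le _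
      _ ≤ ∑ j : Fin k, η := Finset.sum_le_sum fun j _ =>
          ENNReal.toReal_le_of_le_ofReal hη.le (hKμ j).le
      _ ≤ δ := by simpa using hηδ
  · have hev : ∀ᶠ ρ : ℝ in 𝓝[>] 0, ∀ p : Fin k × Fin k, p.1 ≠ p.2 →
        ∀ w ∈ K p.1, ∀ w' ∈ K p.2, ¬ dist w w' < ρ := by
      rw [eventually_all]
      intro p
      by_cases hp : p.1 = p.2
      · simp [hp]
      · have hd : Disjoint (K p.1) (K p.2) := by
          rw [Set.disjoint_left]
          intro x h1 h2
          exact hp ((hKs _ h1 : f x = _).symm.trans (hKs _ h2 : f x = _))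
        obtain ⟨δ', h0, h1⟩ := hd.exists_thickenings (hKc _) (hKc _).isClosed
        filter_upwards [Ioo_mem_nhdsGT h0] with ρ hρ _ w hw w' hw' hlt
        apply Set.disjoint_left.1 h1 (self_subset_thickening h0 _ hw)
        rw [mem_thickening_iff]
        exact ⟨w', hw', hlt.trans hρ.2⟩
    obtain ⟨ρ, h1, h2⟩ := (hev.and self_mem_nhdsWithin).exists
    refine ⟨ρ, h2, ?_⟩
    intro w hw w' hw' hlt
    obtain ⟨j, hj⟩ := mem_iUnion.1 hw
    obtain ⟨j', hj'⟩ := mem_iUnion.1 hw'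
    rw [(hKs _ hj : f w = _), (hKs _ hj' : f w' = _)]
    by_contra hne
    exact h1 (j, j') hne w hj w' hj' hlt

lemma est_aux {X : Type*} [MetricSpace X] [MeasurableSpace X] [BorelSpace X]
    (T : X → X) (Λ : ℝ≥0) (hΛ : 1 < Λ) (hLip : LipschitzWith Λ T)
    (μ : Measure X) [IsProbabilityMeasure μ] (hT : MeasurePreserving T μ μ)
    {k : ℕ} (hk : 0 < k) (f : X → Fin k) (hf : Measurable f)
    (K : Set X) (hK : MeasurableSet K) (ρ : ℝ)
    (hρ : ∀ w ∈ K, ∀ w' ∈ K, dist w w' < ρ → f w = f w')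
    (A : Set X) (hA : MeasurableSet A) (M s : ℝ) (hM : 1 ≤ M) (hs : 0 ≤ s)
    (hAb : ∀ x ∈ A, ∀ n : ℕ, Real.exp (-(n * s)) ≤ M * μ.real (ball x ((Λ : ℝ) ^ n)⁻¹))
    (m : ℕ) (hm : 4 * ((Λ : ℝ) ^ m)⁻¹ ≤ ρ) (γ : ℝ) (hγ0 : 0 < γ) (hγ1 : γ < 1) (n : ℕ) :
    partitionEntropy μ (fun x (i : Fin n) => f (T^[(i : ℕ)] x)) ≤
      Real.log 2 + Real.log M + (n + m) * s + n * (- Real.log γ)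
        + n * (μ.real Kᶜ * Real.log (k / (1 - γ))) + n * (μ.real Aᶜ * Real.log k) := by
  have hΛ1 : (1 : ℝ) < Λ := by exact_mod_cast hΛ
  have hΛ0 : (0 : ℝ) < Λ := by linarith
  have hM0 : 0 < M := by linarith
  have hkR : (1 : ℝ) ≤ k := by exact_mod_cast hk
  set N := n + m with hN
  obtain ⟨F, hFc, hF⟩ := cover_aux μ A ((Λ : ℝ) ^ N)⁻¹ (Real.exp (-(N * s)) / M)
    (by positivity) (fun x hx => by
      rw [div_le_iff₀ hM0, mul_comm _ M]; exact hAb x hx N)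
  have hlab : ∀ (x : X) (i : Fin n), ∃ l : Fin k, ∀ y, dist y x < 2 * ((Λ : ℝ) ^ N)⁻¹ →
      T^[(i : ℕ)] y ∈ K → f (T^[(i : ℕ)] y) = l := by
    intro x i
    by_cases h : ∃ y, dist y x < 2 * ((Λ : ℝ) ^ N)⁻¹ ∧ T^[(i : ℕ)] y ∈ K
    · obtain ⟨y, hy, hyK⟩ := h
      refine ⟨f (T^[(i : ℕ)] y), fun z hz hzK => hρ _ hzK _ hyK ?_⟩
      have h1 : dist z y < 4 * ((Λ : ℝ) ^ N)⁻¹ := by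
        have := dist_triangle_right z y x
        linarith
      have h2 : dist (T^[(i : ℕ)] z) (T^[(i : ℕ)] y) ≤ (Λ : ℝ) ^ (i : ℕ) * dist z y := by
        have := (hLip.iterate (i : ℕ)).dist_le_mul z y
        simpa using this
      have h3 : (Λ : ℝ) ^ (i : ℕ) ≤ (Λ : ℝ) ^ n := pow_le_pow_right₀ hΛ1.le i.2.le
      calc dist (T^[(i : ℕ)] z) (T^[(i : ℕ)] y) ≤ (Λ : ℝ) ^ (i : ℕ) * dist z y := h2
        _ ≤ (Λ : ℝ) ^ n * dist z y := by gcongr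
        _ < (Λ : ℝ) ^ n * (4 * ((Λ : ℝ) ^ N)⁻¹) := by gcongr
        _ = 4 * ((Λ : ℝ) ^ m)⁻¹ := by rw [hN, pow_add]; field_simp
        _ ≤ ρ := hm
    · push Not at h
      exact ⟨⟨0, hk⟩, fun y hy hyK => absurd hyK (h y hy)⟩
  choose l hl using hlab
  set L : ℝ := M * Real.exp (N * s) with hL
  have hL1 : 1 ≤ L := by
    have : 1 ≤ Real.exp (N * s) := Real.one_le_exp (by positivity)
    rw [hL]; nlinarith
  have hL0 : 0 < L := by linarith
  have hFL : (F.card : ℝ) ≤ L := by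
    rw [Real.exp_neg] at hFc
    have he : 0 < Real.exp (N * s) := Real.exp_pos _
    have : (F.card : ℝ) * ((Real.exp (N * s))⁻¹ / M) = F.card / L := by rw [hL]; field_simp
    rw [this, div_le_iff₀ hL0] at hFc
    linarith
  set r : X → Fin n → Fin k → ℝ := fun x i a =>
    γ * (if a = l x i then 1 else 0) + (1 - γ) / k with hr
  have hb0 : 0 < (1 - γ) / k := by
    apply div_pos <;> linarith
  have hrpos : ∀ x i a, 0 < r x i a := by
    intro x i a
    simp only [hr]
    split_ifs
    · linarith
    · linarith
  have hrsum : ∀ x i, ∑ a, r x i a = 1 := by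
    intro x i
    simp only [hr, Finset.sum_add_distrib, ← Finset.mul_sum]
    simp
    field_simp
    ring
  set q : (Fin n → Fin k) → ℝ := fun a =>
    1 / 2 * ((k : ℝ) ^ n)⁻¹ + 1 / (2 * L) * ∑ x ∈ F, ∏ i, r x i (a i) with hq
  have hprod : ∀ (x : X) (a : Fin n → Fin k), 0 < ∏ i, r x i (a i) := fun x a => Finset.prod_pos fun i _ => hrpos x i _
  have hk0 : (0 : ℝ) < k := by linarith
  have hq1 : ∀ a, 1 / 2 * ((k : ℝ) ^ n)⁻¹ ≤ q a := by
    intro a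
    have : 0 ≤ 1 / (2 * L) * ∑ x ∈ F, ∏ i, r x i (a i) :=
      mul_nonneg (by positivity) (Finset.sum_nonneg fun x _ => (hprod x a).le)
    simp only [hq]; linarith
  have hq2 : ∀ x ∈ F, ∀ a, 1 / (2 * L) * ∏ i, r x i (a i) ≤ q a := by
    intro x hx a
    have h1 : ∏ i, r x i (a i) ≤ ∑ x ∈ F, ∏ i, r x i (a i) :=
      Finset.single_le_sum (f := fun x => ∏ i, r x i (a i)) (fun x _ => (hprod x a).le) hx
    have h2 := mul_le_mul_of_nonneg_left h1 (show 0 ≤ 1 / (2 * L) by positivity)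
    have h3 : 0 ≤ 1 / 2 * ((k : ℝ) ^ n)⁻¹ := by positivity
    simp only [hq]; linarith
  have hqpos : ∀ a, 0 < q a := fun a => lt_of_lt_of_le (by positivity) (hq1 a)
  have hqsum : ∑ a, q a ≤ 1 := by
    simp only [hq, Finset.sum_add_distrib, ← Finset.mul_sum]
    rw [Finset.sum_comm]
    have h1 : ∀ x, ∑ a : Fin n → Fin k, ∏ i, r x i (a i) = 1 := by
      intro x
      rw [← Fintype.prod_sum]
      simp [hrsum]
    simp only [h1]
    simp
    have h2 : L⁻¹ * (F.card : ℝ) ≤ 1 := by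
      rw [inv_mul_le_iff₀ hL0]; linarith
    have h3 : (k : ℝ) ^ n * (2⁻¹ * ((k : ℝ) ^ n)⁻¹) = 2⁻¹ := by field_simp
    nlinarith
  have hTi : ∀ i : ℕ, Measurable (T^[i]) := fun i => hT.measurable.iterate i
  have hfn : Measurable (fun x (i : Fin n) => f (T^[(i : ℕ)] x)) :=
    measurable_pi_lambda _ fun i => hf.comp (hTi i)
  refine (entropy_le_integral μ _ hfn q hqpos hqsum).trans ?_
  set B : ℝ := Real.log (k / (1 - γ)) with hB
  have hB0 : 0 ≤ B := by
    apply Real.log_nonneg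
    rw [le_div_iff₀ (by linarith)]; linarith
  have hlγ : 0 ≤ - Real.log γ := by
    have := Real.log_nonpos hγ0.le hγ1.le
    linarith
  have hlL : Real.log L = Real.log M + N * s := by
    rw [hL, Real.log_mul hM0.ne' (Real.exp_pos _).ne', Real.log_exp]
  have hlL0 : 0 ≤ Real.log L := Real.log_nonneg hL1
  have hlk : 0 ≤ Real.log k := Real.log_nonneg hkR
  have hpt : ∀ y, - Real.log (q (fun i : Fin n => f (T^[(i : ℕ)] y))) ≤
      (Real.log 2 + Real.log L + n * (- Real.log γ))
        + (∑ i : Fin n, (T^[(i : ℕ)] ⁻¹' Kᶜ).indicator (fun _ => B) y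
          + Aᶜ.indicator (fun _ => n * Real.log k) y) := by
    intro y
    have hind : ∀ i : Fin n, 0 ≤ (T^[(i : ℕ)] ⁻¹' Kᶜ).indicator (fun _ => B) y := fun i =>
      Set.indicator_nonneg (fun _ _ => hB0) y
    by_cases hy : y ∈ A
    · rw [Set.indicator_of_notMem (by simpa using hy)]
      obtain ⟨x, hxF, hyx⟩ := hF y hy
      have h1 := Real.log_le_log (mul_pos (by positivity) (hprod x _))
        (hq2 x hxF (fun i : Fin n => f (T^[(i : ℕ)] y)))
      rw [Real.log_mul (by positivity) (hprod x _).ne', Real.log_div one_ne_zero (by positivity),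
        Real.log_one, Real.log_mul two_ne_zero hL0.ne',
        Real.log_prod (fun i _ => (hrpos x i _).ne')] at h1
      have h2 : ∀ i : Fin n, - Real.log (r x i (f (T^[(i : ℕ)] y))) ≤
          - Real.log γ + (T^[(i : ℕ)] ⁻¹' Kᶜ).indicator (fun _ => B) y := by
        intro i
        by_cases hi : T^[(i : ℕ)] y ∈ K
        · have h3 : γ ≤ r x i (f (T^[(i : ℕ)] y)) := by
            simp only [hr]
            rw [if_pos (hl x i y hyx hi)]
            linarith
          have := Real.log_le_log hγ0 h3
          have := hind i
          linarith
        · rw [Set.indicator_of_mem (by simpa using hi)]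
          have h3 : (1 - γ) / k ≤ r x i (f (T^[(i : ℕ)] y)) := by
            simp only [hr]
            have : 0 ≤ γ * (if f (T^[(i : ℕ)] y) = l x i then (1 : ℝ) else 0) := by
              split_ifs <;> simp [hγ0.le]
            linarith
          have h4 := Real.log_le_log hb0 h3
          have h5 : Real.log ((1 - γ) / k) = - B := by
            rw [hB, ← Real.log_inv, inv_div]
          linarith
      have h3 := Finset.sum_le_sum (fun i (_ : i ∈ Finset.univ) => h2 i)
      rw [Finset.sum_neg_distrib, Finset.sum_add_distrib] at h3
      simp only [Finset.sum_const, Finset.card_univ, Fintype.card_fin, nsmul_eq_mul] at h3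
      linarith
    · rw [Set.indicator_of_mem (by simpa using hy)]
      have h1 := Real.log_le_log (by positivity) (hq1 (fun i : Fin n => f (T^[(i : ℕ)] y)))
      rw [Real.log_mul (by norm_num) (by positivity), Real.log_inv, Real.log_pow,
        one_div, Real.log_inv] at h1
      have h2 := Finset.sum_nonneg (fun i (_ : i ∈ Finset.univ) => hind i)
      have h3 : 0 ≤ n * (- Real.log γ) := by positivity
      linarith
  have hi1 : ∀ i : Fin n, Integrable ((T^[(i : ℕ)] ⁻¹' Kᶜ).indicator (fun _ => B)) μ := fun i =>
    (integrable_const B).indicator (hTi i hK.compl)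
  have hi2 : Integrable (Aᶜ.indicator (fun _ => n * Real.log k)) μ :=
    (integrable_const _).indicator hA.compl
  have hi3 : Integrable (fun y => ∑ i : Fin n, (T^[(i : ℕ)] ⁻¹' Kᶜ).indicator (fun _ => B) y) μ :=
    integrable_finsetSum _ fun i _ => hi1 i
  have hi0 : Integrable (fun y => - Real.log (q (fun i : Fin n => f (T^[(i : ℕ)] y)))) μ := by
    have : Integrable (fun a => - Real.log (q a))
      (μ.map (fun x (i : Fin n) => f (T^[(i : ℕ)] x))) := Integrable.of_finite
    exact this.comp_measurable hfn
  refine (integral_mono hi0 ((integrable_const _).add (hi3.add hi2)) hpt).trans ?_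
  have e1 : ∀ i : Fin n, ∫ y, (T^[(i : ℕ)] ⁻¹' Kᶜ).indicator (fun _ => B) y ∂μ
      = μ.real Kᶜ * B := by
    intro i
    rw [integral_indicator (hTi i hK.compl), setIntegral_const,
      (hT.iterate i).measureReal_preimage hK.compl.nullMeasurableSet, smul_eq_mul]
  have e2 : ∫ y, Aᶜ.indicator (fun _ => n * Real.log k) y ∂μ = μ.real Aᶜ * (n * Real.log k) := by
    rw [integral_indicator hA.compl, setIntegral_const, smul_eq_mul]
  rw [integral_add' (integrable_const _) (hi3.add hi2), integral_add' hi3 hi2,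
    integral_finsetSum _ (fun i _ => hi1 i), e2]
  simp only [e1]
  simp only [integral_const, probReal_univ, one_smul, Finset.sum_const, Finset.card_univ,
    Fintype.card_fin, nsmul_eq_mul]
  rw [hlL, hN]
  push_cast
  linarith

lemma measurable_ball_aux {X : Type*} [MetricSpace X] [TopologicalSpace.SeparableSpace X]
    [MeasurableSpace X] [BorelSpace X] (μ : Measure X) [IsProbabilityMeasure μ] (r : ℝ) :
    Measurable (fun x => μ.real (ball x r)) := by
  have : SecondCountableTopology X := UniformSpace.secondCountable_of_separable X
  have h : MeasurableSet {p : X × X | dist p.2 p.1 < r} :=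
    (isOpen_lt (by fun_prop) (by fun_prop)).measurableSet
  exact (measurable_measure_prodMk_left (ν := μ) h).ennreal_toReal

lemma liminf_aux {X : Type*} [MetricSpace X]
    [CompleteSpace X] [TopologicalSpace.SeparableSpace X] [MeasurableSpace X] [BorelSpace X]
    (T : X → X) (Λ : ℝ≥0) (hΛ : 1 < Λ) (hLip : LipschitzWith Λ T)
    (μ : Measure X) [IsProbabilityMeasure μ] (hT : MeasurePreserving T μ μ)
    {k : ℕ} (f : X → Fin k) (hf : Measurable f) (s : ℝ) (hs : 0 ≤ s)
    (h : ∀ᵐ x ∂μ, ∃ M : ℕ, ∀ n : ℕ,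
      Real.exp (-(n * s)) ≤ M * μ.real (ball x ((Λ : ℝ) ^ n)⁻¹)) :
    liminf (fun n : ℕ =>
        partitionEntropy μ (fun x (i : Fin n) => f (T^[(i : ℕ)] x)) / n) atTop ≤ s := by
  have hΛ1 : (1 : ℝ) < Λ := by exact_mod_cast hΛ
  obtain ⟨x0⟩ : Nonempty X := nonempty_of_isProbabilityMeasure μ
  have hk : 0 < k := (f x0).pos
  have hkR : (1 : ℝ) ≤ k := by exact_mod_cast hk
  have hlk : 0 ≤ Real.log k := Real.log_nonneg hkR
  apply le_of_forall_pos_le_add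
  intro ε hε
  set γ := Real.exp (-(ε / 4)) with hγ
  have hγ0 : 0 < γ := Real.exp_pos _
  have hγ1 : γ < 1 := by rw [hγ, Real.exp_lt_one_iff]; linarith
  have hlγ : - Real.log γ = ε / 4 := by rw [hγ, Real.log_exp]; ring
  set B := Real.log (k / (1 - γ)) with hB
  have hB0 : 0 ≤ B := by
    apply Real.log_nonneg
    rw [le_div_iff₀ (by linarith)]; linarith
  obtain ⟨K, hK, hKδ, ρ, hρ0, hρ⟩ := lusin_aux μ f hf (ε / 4 / (B + 1)) (by positivity)
  have hKB : μ.real Kᶜ * B ≤ ε / 4 := by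
    calc μ.real Kᶜ * B ≤ (ε / 4 / (B + 1)) * B := by gcongr
      _ ≤ ε / 4 := by
        rw [div_mul_eq_mul_div, div_le_iff₀ (by positivity)]
        nlinarith
  let A : ℕ → Set X := fun M => {x | ∀ n : ℕ,
      Real.exp (-(n * s)) ≤ M * μ.real (ball x ((Λ : ℝ) ^ n)⁻¹)}
  have hAm : ∀ M, MeasurableSet (A M) := by
    intro M
    have : A M = ⋂ n : ℕ, {x | Real.exp (-(n * s)) ≤ M * μ.real (ball x ((Λ : ℝ) ^ n)⁻¹)} := by
      ext x; simp [A]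
    rw [this]
    exact MeasurableSet.iInter fun n =>
      measurableSet_le measurable_const ((measurable_ball_aux μ _).const_mul _)
  have hAmono : Monotone A := by
    intro M M' hMM x hx n
    refine (hx n).trans ?_
    have : (M : ℝ) ≤ M' := by exact_mod_cast hMM
    gcongr
  have hAU : μ.real (⋃ M, A M) = 1 := by
    have : ∀ᵐ x ∂μ, x ∈ ⋃ M, A M := by
      filter_upwards [h] with x hx
      simpa [A] using hx
    have h1 : μ (⋃ M, A M) = 1 := by
      exact (prob_compl_eq_zero_iff (MeasurableSet.iUnion hAm)).1 this
    simp [Measure.real, h1]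
  have hlim : Tendsto (fun M => μ.real (A M)ᶜ * Real.log k) atTop (𝓝 0) := by
    have h1 : Tendsto (fun M => μ.real (A M)) atTop (𝓝 1) := by
      rw [← hAU]
      exact (ENNReal.tendsto_toReal (measure_ne_top _ _)).comp (tendsto_measure_iUnion_atTop hAmono)
    have h2 : ∀ M, μ.real (A M)ᶜ = 1 - μ.real (A M) := fun M => probReal_compl_eq_one_sub (hAm M)
    simp_rw [h2]
    simpa using (h1.const_sub 1).mul_const (Real.log k)
  obtain ⟨M, hMA, hM1⟩ := ((hlim.eventually (ge_mem_nhds (show 0 < ε / 4 by positivity))).and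
    (eventually_ge_atTop 1)).exists
  have hM1' : (1 : ℝ) ≤ M := by exact_mod_cast hM1
  obtain ⟨m, hm⟩ : ∃ m : ℕ, 4 * ((Λ : ℝ) ^ m)⁻¹ ≤ ρ := by
    obtain ⟨m, hm⟩ := exists_pow_lt_of_lt_one (show 0 < ρ / 4 by positivity)
      (inv_lt_one_of_one_lt₀ hΛ1)
    refine ⟨m, ?_⟩
    rw [inv_pow] at hm
    linarith
  have hest := est_aux T Λ hΛ hLip μ hT hk f hf K hK ρ hρ (A M) (hAm M) M s hM1' hs
    (fun x hx n => hx n) m hm γ hγ0 hγ1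
  set C := Real.log 2 + Real.log M + m * s with hC
  have hev : ∀ᶠ n : ℕ in atTop,
      partitionEntropy μ (fun x (i : Fin n) => f (T^[(i : ℕ)] x)) / n ≤ s + ε := by
    have h1 : Tendsto (fun n : ℕ => C / (n : ℝ)) atTop (𝓝 0) := tendsto_const_div_atTop_nhds_zero_nat C
    filter_upwards [h1.eventually (ge_mem_nhds (show 0 < ε / 4 by positivity)),
      eventually_ge_atTop 1] with n hn hn1
    have hn0 : (0 : ℝ) < n := by exact_mod_cast hn1
    rw [div_le_iff₀ hn0] at hn ⊢
    refine (hest n).trans ?_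
    rw [hlγ]
    have h2 := mul_le_mul_of_nonneg_left hKB hn0.le
    have h3 := mul_le_mul_of_nonneg_left hMA hn0.le
    rw [hC] at hn
    linarith
  refine liminf_le_of_frequently_le hev.frequently ?_
  refine isBoundedUnder_of ⟨0, fun n => ?_⟩
  apply div_nonneg _ (Nat.cast_nonneg n)
  exact Finset.sum_nonneg fun a _ => Real.negMulLog_nonneg ENNReal.toReal_nonneg measureReal_le_one

lemma ae_const_aux {X : Type*} [MetricSpace X]
    [CompleteSpace X] [TopologicalSpace.SeparableSpace X] [MeasurableSpace X] [BorelSpace X]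
    (T : X → X) (Λ : ℝ≥0) (hΛ : 1 < Λ) (hLip : LipschitzWith Λ T)
    (μ : Measure X) [IsProbabilityMeasure μ] (herg : Ergodic T μ) (c : ℝ) (hc : 0 ≤ c)
    (hlt : ENNReal.ofReal c <
      kolmogorovSinaiEntropy T μ / ENNReal.ofReal (Real.log (Λ : ℝ))) :
    ∀ᵐ x ∂μ, ENNReal.ofReal c ≤ upperLocalDim dist μ x := by
  have hΛ1 : (1 : ℝ) < Λ := by exact_mod_cast hΛ
  have hΛ0 : (0 : ℝ) < Λ := by linarith
  have hlog : 0 < Real.log Λ := Real.log_pos hΛ1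
  set s := c * Real.log Λ with hs
  have hs0 : 0 ≤ s := by positivity
  let E : Set X := {x | ∃ M : ℕ, ∀ n : ℕ,
      Real.exp (-(n * s)) ≤ M * μ.real (ball x ((Λ : ℝ) ^ n)⁻¹)}
  have hEm : MeasurableSet E := by
    have : E = ⋃ M : ℕ, ⋂ n : ℕ,
        {x | Real.exp (-(n * s)) ≤ M * μ.real (ball x ((Λ : ℝ) ^ n)⁻¹)} := by
      ext x; simp [E]
    rw [this]
    exact MeasurableSet.iUnion fun M => MeasurableSet.iInter fun n =>
      measurableSet_le measurable_const ((measurable_ball_aux μ _).const_mul _)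
  have hEinv : E ⊆ T ⁻¹' E := by
    rintro x ⟨M, hM⟩
    obtain ⟨M', hM'⟩ := exists_nat_ge (M * Real.exp s)
    refine ⟨M', fun n => ?_⟩
    have h1 : μ.real (ball x ((Λ : ℝ) ^ (n + 1))⁻¹) ≤ μ.real (ball (T x) ((Λ : ℝ) ^ n)⁻¹) := by
      rw [← herg.toMeasurePreserving.measureReal_preimage
        (measurableSet_ball (x := T x)).nullMeasurableSet]
      apply measureReal_mono _ (measure_ne_top _ _)
      intro y hy
      rw [mem_ball] at hy
      rw [mem_preimage, mem_ball]
      calc dist (T y) (T x) ≤ Λ * dist y x := hLip.dist_le_mul y x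
        _ < Λ * ((Λ : ℝ) ^ (n + 1))⁻¹ := by gcongr
        _ = ((Λ : ℝ) ^ n)⁻¹ := by rw [pow_succ]; field_simp
    have h2 := hM (n + 1)
    calc Real.exp (-(n * s)) = Real.exp s * Real.exp (-((n + 1 : ℕ) * s)) := by
          rw [← Real.exp_add]; congr 1; push_cast; ring
      _ ≤ Real.exp s * (M * μ.real (ball x ((Λ : ℝ) ^ (n + 1))⁻¹)) := by gcongr
      _ ≤ Real.exp s * (M * μ.real (ball (T x) ((Λ : ℝ) ^ n)⁻¹)) := by gcongr
      _ = (M * Real.exp s) * μ.real (ball (T x) ((Λ : ℝ) ^ n)⁻¹) := by ring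
      _ ≤ M' * μ.real (ball (T x) ((Λ : ℝ) ^ n)⁻¹) := by gcongr
  have hbad : ∀ x, ¬ ENNReal.ofReal c ≤ upperLocalDim dist μ x → x ∈ E := by
    intro x hx
    rw [not_le] at hx
    have hset : ∀ ε, {y | dist x y < ε} = ball x ε := by
      intro ε; ext y; rw [mem_ball']; rfl
    unfold upperLocalDim at hx
    simp only [hset] at hx
    split_ifs at hx with h0
    · simp at hx
    · push Not at h0
      have hpos : ∀ ε > 0, 0 < μ.real (ball x ε) := fun ε hε =>
        ENNReal.toReal_pos (hset ε ▸ h0 ε hε) (measure_ne_top _ _)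
      have hev := eventually_lt_of_limsup_lt hx
      have hten : Tendsto (fun n : ℕ => ((Λ : ℝ) ^ n)⁻¹) atTop (𝓝[>] 0) := by
        rw [tendsto_nhdsWithin_iff]
        refine ⟨(tendsto_pow_atTop_atTop_of_one_lt hΛ1).inv_tendsto_atTop, ?_⟩
        exact Eventually.of_forall fun n => by simp only [mem_Ioi]; positivity
      obtain ⟨N, hN⟩ := eventually_atTop.1 ((hten.eventually hev).and (eventually_ge_atTop 1))
      have hbig : ∀ n ≥ N, Real.exp (-(n * s)) ≤ μ.real (ball x ((Λ : ℝ) ^ n)⁻¹) := by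
        intro n hn
        obtain ⟨h1, h2⟩ := hN n hn
        have hn0 : (0 : ℝ) < n := by exact_mod_cast h2
        have h3 := (ENNReal.ofReal_lt_ofReal_iff').1 h1
        have h4 := h3.1
        rw [Real.log_inv, Real.log_pow, div_lt_iff_of_neg (by nlinarith)] at h4
        rw [← Real.le_log_iff_exp_le (hpos _ (by positivity))]
        rw [hs, Measure.real]
        linarith
      obtain ⟨M, hM⟩ : ∃ M : ℕ, ∀ n ∈ Finset.range N,
          (μ.real (ball x ((Λ : ℝ) ^ n)⁻¹))⁻¹ ≤ M := by
        obtain ⟨M, hM⟩ := exists_nat_ge (∑ n ∈ Finset.range N, (μ.real (ball x ((Λ : ℝ) ^ n)⁻¹))⁻¹)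
        refine ⟨M, fun n hn => le_trans ?_ hM⟩
        exact Finset.single_le_sum (f := fun n => (μ.real (ball x ((Λ : ℝ) ^ n)⁻¹))⁻¹)
          (fun n _ => inv_nonneg.2 measureReal_nonneg) hn
      refine ⟨M + 1, fun n => ?_⟩
      have hp := hpos ((Λ : ℝ) ^ n)⁻¹ (by positivity)
      push_cast
      rcases lt_or_ge n N with hn | hn
      · have h1 := hM n (Finset.mem_range.2 hn)
        rw [inv_le_iff_one_le_mul₀ hp] at h1
        have h2 : Real.exp (-(n * s)) ≤ 1 := by
          rw [Real.exp_le_one_iff]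
          have : 0 ≤ n * s := by positivity
          linarith
        nlinarith
      · have h1 := hbig n hn
        have : 0 ≤ (M : ℝ) * μ.real (ball x ((Λ : ℝ) ^ n)⁻¹) := by positivity
        nlinarith
  rcases herg.ae_empty_or_univ_of_ae_le_preimage hEm.nullMeasurableSet
    (LE.le.eventuallyLE hEinv) with h | h
  · filter_upwards [eventuallyEq_empty.1 h] with x hx
    by_contra hcon
    exact hx (hbad x hcon)
  · exfalso
    have hE : ∀ᵐ x ∂μ, x ∈ E := eventuallyEq_univ.1 h
    have hle : kolmogorovSinaiEntropy T μ ≤ ENNReal.ofReal s := by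
      refine iSup_le fun k => iSup_le fun f => iSup_le fun hf => ENNReal.ofReal_le_ofReal ?_
      exact liminf_aux T Λ hΛ hLip μ herg.toMeasurePreserving f hf s hs0 hE
    rw [hs, ENNReal.ofReal_mul hc] at hle
    exact absurd (ENNReal.div_le_of_le_mul hle) (not_le.2 hlt)

/-- Let `X` be a Polish metric space, `T : X → X` a bijection which is
Lipschitz with constant `Λ > 1` and whose inverse is Lipschitz, and `μ` an ergodic
`T`-invariant Borel probability measure. Then `d̄_μ(x) ≥ h_μ(T) / log Λ` for `μ`-a.e. `x`
(equivalently, `dim_P^-(μ) ≥ h_μ(T) / log Λ`). -/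
theorem upperLocalDim_ge_entropy_div_logLipschitz {X : Type*} [MetricSpace X]
    [CompleteSpace X] [TopologicalSpace.SeparableSpace X]
    [MeasurableSpace X] [BorelSpace X]
    (T S : X → X) (hST : Function.LeftInverse S T) (hTS : Function.RightInverse S T)
    (Λ : ℝ≥0) (hΛ : 1 < Λ) (hLip : LipschitzWith Λ T)
    (K' : ℝ≥0) (hK' : LipschitzWith K' S)
    (μ : Measure X) [IsProbabilityMeasure μ] (herg : Ergodic T μ) :
    ∀ᵐ x ∂μ,
      kolmogorovSinaiEntropy T μ / ENNReal.ofReal (Real.log (Λ : ℝ))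
        ≤ upperLocalDim dist μ x := by
  have h : ∀ᵐ x ∂μ, ∀ q : ℚ, 0 ≤ q → ENNReal.ofReal (q : ℝ) <
      kolmogorovSinaiEntropy T μ / ENNReal.ofReal (Real.log (Λ : ℝ)) →
      ENNReal.ofReal (q : ℝ) ≤ upperLocalDim dist μ x := by
    rw [ae_all_iff]
    intro q
    by_cases h0 : 0 ≤ q
    · by_cases h1 : ENNReal.ofReal (q : ℝ) <
          kolmogorovSinaiEntropy T μ / ENNReal.ofReal (Real.log (Λ : ℝ))
      · filter_upwards [ae_const_aux T Λ hΛ hLip μ herg q (by exact_mod_cast h0) h1] with x hx _ _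
        exact hx
      · exact Eventually.of_forall fun x _ hx => absurd hx h1
    · exact Eventually.of_forall fun x hx => absurd hx h0
  filter_upwards [h] with x hx
  by_contra! hcon
  obtain ⟨q, hq0, hq1, hq2⟩ := ENNReal.lt_iff_exists_rat_btwn.1 hcon
  exact absurd (hx q hq0 hq2) (not_le.2 hq1)
end

section
/- For the full shift T on X = ∏_{n∈ℤ} M over a perfect Polish metric space M, for every L > 0 the set {μ ∈ M_e : h_μ(T) ≥ L} of ergodic invariant measures with entropy at least L is dense in M_e (with the topology induced from the weak topology on M(T)). -/
open Filter MeasureTheory Topology Metric Set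
open scoped ENNReal NNReal

noncomputable section
attribute [local instance] Classical.propDecidable

end

namespace LargeEntropy
open ProbabilityTheory
open scoped symmDiff

lemma fullShift_iterate {M : Type*} (n : ℕ) (x : ℤ → M) (i : ℤ) :
    (fullShift^[n] x) i = x (i - n) := by
  induction n generalizing i with
  | zero => simp
  | succ n ih =>
    rw [Function.iterate_succ_apply']
    simp only [fullShift, ih]
    congr 1
    push_cast
    ring

lemma measurable_fullShift {M : Type*} [MeasurableSpace M] :
    Measurable (fullShift : (ℤ → M) → (ℤ → M)) :=
  measurable_pi_lambda _ fun i => measurable_pi_apply (i - 1)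

section Bernoulli

variable {F : Type*} [MeasurableSpace F] (p : Measure F) [IsProbabilityMeasure p]

/-- The Bernoulli measure on `ℤ → F`. -/
noncomputable def bern : Measure (ℤ → F) := Measure.infinitePi (fun _ : ℤ => p)

instance : IsProbabilityMeasure (bern p) := by unfold bern; infer_instance

lemma mp_fullShift : MeasurePreserving fullShift (bern p) (bern p) := by
  refine ⟨measurable_fullShift, ?_⟩
  apply Measure.eq_infinitePi
  intro s t ht
  rw [Measure.map_apply measurable_fullShift (MeasurableSet.pi s.countable_toSet fun i _ => ht i)]
  have : fullShift ⁻¹' (Set.pi (s : Set ℤ) t) =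
      Set.pi ((s.image (fun i => i - 1) : Finset ℤ) : Set ℤ) (fun i => t (i + 1)) := by
    ext x
    have h : ∀ a : ℤ, t (a - 1 + 1) = t a := fun a => by rw [sub_add_cancel]
    simp only [fullShift, Set.mem_preimage, Set.mem_pi, Finset.coe_image, Set.forall_mem_image, h]
  rw [this, bern, Measure.infinitePi_pi _ (fun i _ => ht _), Finset.prod_image]
  · refine Finset.prod_congr rfl fun i _ => ?_
    rw [sub_add_cancel]
  · intro a _ b _ h
    exact sub_left_injective h

lemma bern_indep (I : Finset ℤ) : ∃ n : ℕ, ∀ U V : Set (I → F), MeasurableSet U → MeasurableSet V →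
    bern p ((I.restrict ⁻¹' U) ∩ (fullShift^[n] ⁻¹' (I.restrict ⁻¹' V))) =
    bern p (I.restrict ⁻¹' U) * bern p (I.restrict ⁻¹' V) := by
  set K := I.sup Int.natAbs with hK
  have hKI : ∀ i ∈ I, i.natAbs ≤ K := fun i hi => Finset.le_sup (f := Int.natAbs) hi
  refine ⟨2 * K + 1, fun U V hU hV => ?_⟩
  set n := 2 * K + 1 with hn
  let J : Finset ℤ := I.image (fun i => i - (n : ℤ))
  have hdisj : Disjoint I J := by
    rw [Finset.disjoint_left]
    intro i hi hj
    obtain ⟨j, hjI, rfl⟩ := Finset.mem_image.1 hj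
    have h1 := hKI _ hi
    have h2 := hKI _ hjI
    omega
  have hind := (iIndepFun_infinitePi (P := fun _ : ℤ => p) (X := fun _ : ℤ => (id : F → F))
    (fun _ => measurable_id)).indepFun_finset I J hdisj (fun i => by fun_prop)
  have hmem : ∀ i : I, (i : ℤ) - n ∈ J := fun i => Finset.mem_image_of_mem _ i.2
  let r : (J → F) → (I → F) := fun w i => w ⟨(i : ℤ) - n, hmem i⟩
  have hr : Measurable r := measurable_pi_lambda _ fun i => measurable_pi_apply _
  have key := hind.measure_inter_preimage_eq_mul U (r ⁻¹' V) hU (hr hV)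
  have e2 : (fun (a : ℤ → F) (i : J) => id (a i)) ⁻¹' (r ⁻¹' V)
      = fullShift^[n] ⁻¹' (I.restrict ⁻¹' V) := by
    ext a
    have : r (fun i : J => id (a i)) = I.restrict (fullShift^[n] a) := by
      funext i
      simp [r, fullShift_iterate]
    simp only [Set.mem_preimage, this]
  rw [e2] at key
  have hpres := ((mp_fullShift p).iterate n).measure_preimage
    ((Finset.measurable_restrict I) hV).nullMeasurableSet
  rw [← hpres]
  exact key

variable {X : Type*} [MeasurableSpace X]

/-- Sets depending on finitely many coordinates of the noise. -/
def cylAlg (X F : Type*) [MeasurableSpace X] [MeasurableSpace F] : Set (Set (X × (ℤ → F))) :=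
  {B | ∃ (I : Finset ℤ) (B' : Set (X × (I → F))), MeasurableSet B' ∧
    B = (Prod.map id I.restrict) ⁻¹' B'}

lemma cylAlg_alg : IsSetAlgebra (cylAlg X F) where
  empty_mem := ⟨∅, ∅, MeasurableSet.empty, by simp⟩
  compl_mem := by
    rintro s ⟨I, B, hB, rfl⟩
    exact ⟨I, Bᶜ, hB.compl, rfl⟩
  union_mem := by
    rintro s t ⟨I, B, hB, rfl⟩ ⟨J, C, hC, rfl⟩
    refine ⟨I ∪ J, (Prod.map id (Finset.restrict₂ (π := fun _ => F) (Finset.subset_union_left : I ⊆ I ∪ J))) ⁻¹' B ∪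
      (Prod.map id (Finset.restrict₂ (π := fun _ => F) (Finset.subset_union_right : J ⊆ I ∪ J))) ⁻¹' C, ?_, ?_⟩
    · exact MeasurableSet.union
        ((measurable_id.prodMap (Finset.measurable_restrict₂ _)) hB)
        ((measurable_id.prodMap (Finset.measurable_restrict₂ _)) hC)
    · rfl

lemma cylAlg_gen : (inferInstance : MeasurableSpace (X × (ℤ → F))) =
    MeasurableSpace.generateFrom (cylAlg X F) := by
  apply le_antisymm
  · refine sup_le ?_ ?_
    · rintro _ ⟨s, hs, rfl⟩
      apply MeasurableSpace.measurableSet_generateFrom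
      exact ⟨∅, Prod.fst ⁻¹' s, measurable_fst hs, rfl⟩
    · rw [← measurable_iff_comap_le]
      refine @measurable_pi_lambda _ _ _ (_) _ _ fun i => ?_
      intro s hs
      apply MeasurableSpace.measurableSet_generateFrom
      refine ⟨{i}, (fun q => q.2 ⟨i, by simp⟩) ⁻¹' s, ?_, rfl⟩
      exact ((measurable_pi_apply _).comp measurable_snd) hs
  · apply MeasurableSpace.generateFrom_le
    rintro _ ⟨I, B, hB, rfl⟩
    exact (measurable_id.prodMap (Finset.measurable_restrict I)) hB

variable {T : X → X} {μ : Measure X} [IsProbabilityMeasure μ]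

lemma prod_real_apply (m : Measure (ℤ → F)) [IsProbabilityMeasure m] {s : Set (X × (ℤ → F))}
    (hs : MeasurableSet s) :
    (μ.prod m).real s = ∫ x, m.real (Prod.mk x ⁻¹' s) ∂μ := by
  rw [measureReal_def, Measure.prod_apply hs, ← integral_toReal]
  · rfl
  · exact (measurable_measure_prodMk_left hs).aemeasurable
  · exact ae_of_all _ fun x => measure_lt_top _ _

lemma ergodic_prod (hT : Ergodic T μ) :
    Ergodic (Prod.map T (fullShift : (ℤ → F) → (ℤ → F))) (μ.prod (bern p)) := by
  have hR := hT.toMeasurePreserving.prod (mp_fullShift p)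
  refine ⟨hR, ⟨fun A hA hinv => ?_⟩⟩
  set m := bern p
  set P := μ.prod m
  set a : X → ℝ := fun x => m.real (Prod.mk x ⁻¹' A) with ha
  have ham : Measurable a := (measurable_measure_prodMk_left hA).ennreal_toReal
  have hainv : a ∘ T = a := by
    funext x
    have : (Prod.mk x ⁻¹' A) = fullShift ⁻¹' (Prod.mk (T x) ⁻¹' A) := by
      conv_lhs => rw [← hinv]
      rfl
    simp only [ha, Function.comp]
    rw [this, measureReal_def, measureReal_def,
      (mp_fullShift p).measure_preimage (measurable_prodMk_left hA).nullMeasurableSet]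
  obtain ⟨c, hc⟩ := hT.toPreErgodic.ae_eq_const_of_ae_eq_comp ham hainv
  have hPA : P.real A = c := by
    rw [prod_real_apply _ hA, integral_congr_ae hc]
    simp
  have hc0 : 0 ≤ c := hPA ▸ measureReal_nonneg
  have hc1 : c ≤ 1 := hPA ▸ measureReal_le_one
  have main : ∀ ε : ℝ, 0 < ε → |c - c * c| ≤ 4 * ε := by
    intro ε hε
    obtain ⟨B, ⟨I, B', hB', hBe⟩, hAB⟩ := (Measure.MeasureDense.of_generateFrom_isSetAlgebra_finite
      P cylAlg_alg cylAlg_gen).approx A hA (measure_ne_top _ _) ε hε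
    have hB : MeasurableSet B := by
      rw [hBe]
      exact (measurable_id.prodMap (Finset.measurable_restrict I)) hB'
    have hAB' : P.real (A ∆ B) ≤ ε := ENNReal.toReal_le_of_le_ofReal hε.le hAB.le
    set b : X → ℝ := fun x => m.real (Prod.mk x ⁻¹' B) with hb
    have hbm : Measurable b := (measurable_measure_prodMk_left hB).ennreal_toReal
    have hb0 : ∀ x, 0 ≤ b x := fun x => measureReal_nonneg
    have hb1 : ∀ x, b x ≤ 1 := fun x => measureReal_le_one
    have hbi : Integrable (fun x => |b x - c|) μ := by
      refine Integrable.of_bound (C := 1) (by fun_prop) (ae_of_all _ fun x => ?_)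
      rw [Real.norm_eq_abs, abs_abs, abs_le]
      constructor <;> linarith [hb0 x, hb1 x]
    have h1 : ∫ x, |b x - c| ∂μ ≤ ε := by
      refine le_trans ?_ hAB'
      rw [prod_real_apply _ (hA.symmDiff hB)]
      refine integral_mono_ae hbi (Measure.integrable_measure_prodMk_left (hA.symmDiff hB)
        (measure_ne_top _ _)) ?_
      filter_upwards [hc] with x hx
      have hx' : c = a x := hx.symm
      rw [hx', abs_sub_comm]
      exact abs_measureReal_sub_le_measureReal_symmDiff
        (measurable_prodMk_left hA).nullMeasurableSet (measurable_prodMk_left hB).nullMeasurableSet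
    obtain ⟨n, hn⟩ := bern_indep p I
    have hRn := hR.iterate n
    have hTn := hT.toMeasurePreserving.iterate n
    set R := (Prod.map T (fullShift : (ℤ → F) → (ℤ → F))) with hRdef
    have hRi : R^[n] = Prod.map T^[n] fullShift^[n] := Prod.map_iterate _ _ _
    have hinvn : R^[n] ⁻¹' A = A := Function.IsFixedPt.preimage_iterate hinv n
    have hC : MeasurableSet (B ∩ R^[n] ⁻¹' B) := hB.inter (hRn.measurable hB)
    have h2 : |c - P.real (B ∩ R^[n] ⁻¹' B)| ≤ 2 * ε := by
      rw [← hPA]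
      refine (abs_measureReal_sub_le_measureReal_symmDiff hA.nullMeasurableSet
        hC.nullMeasurableSet).trans ?_
      have hsub : A ∆ (B ∩ R^[n] ⁻¹' B) ⊆ (A ∆ B) ∪ (R^[n] ⁻¹' (A ∆ B)) := by
        intro z hz
        have hz' : z ∈ A ↔ R^[n] z ∈ A := by
          rw [← Set.mem_preimage, hinvn]
        simp only [Set.mem_symmDiff, Set.mem_inter_iff, Set.mem_union, Set.mem_preimage] at hz ⊢
        tauto
      refine (measureReal_mono hsub).trans ((measureReal_union_le _ _).trans ?_)
      have : P.real (R^[n] ⁻¹' (A ∆ B)) = P.real (A ∆ B) := by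
        rw [measureReal_def, hRn.measure_preimage (hA.symmDiff hB).nullMeasurableSet]
        rfl
      rw [this]
      linarith
    have h3 : P.real (B ∩ R^[n] ⁻¹' B) = ∫ x, b x * b (T^[n] x) ∂μ := by
      rw [prod_real_apply _ hC]
      congr 1
      funext x
      have e1 : Prod.mk x ⁻¹' (B ∩ R^[n] ⁻¹' B) = (I.restrict ⁻¹' (Prod.mk x ⁻¹' B')) ∩
          (fullShift^[n] ⁻¹' (I.restrict ⁻¹' (Prod.mk (T^[n] x) ⁻¹' B'))) := by
        rw [hRi, hBe]
        rfl
      rw [e1, measureReal_def, hn _ _ (measurable_prodMk_left hB') (measurable_prodMk_left hB'),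
        ENNReal.toReal_mul, hb, hBe]
      rfl
    have hbTi : Integrable (fun x => |b (T^[n] x) - c|) μ := hTn.integrable_comp_of_integrable hbi
    have h4 : ∫ x, |b (T^[n] x) - c| ∂μ ≤ ε := by
      refine le_trans (le_of_eq ?_) h1
      have := integral_map (μ := μ) hTn.measurable.aemeasurable
        (f := fun x => |b x - c|) (by fun_prop)
      rw [hTn.map_eq] at this
      exact this.symm
    have hbb : Integrable (fun x => b x * b (T^[n] x)) μ := by
      refine Integrable.of_bound (C := 1)
        (hbm.mul (hbm.comp hTn.measurable)).aestronglyMeasurable (ae_of_all _ fun x => ?_)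
      rw [Real.norm_eq_abs, abs_of_nonneg (mul_nonneg (hb0 _) (hb0 _))]
      exact mul_le_one₀ (hb1 _) (hb0 _) (hb1 _)
    have h5 : |P.real (B ∩ R^[n] ⁻¹' B) - c * c| ≤ 2 * ε := by
      have e : P.real (B ∩ R^[n] ⁻¹' B) - c * c = ∫ x, (b x * b (T^[n] x) - c * c) ∂μ := by
        rw [h3, integral_sub hbb (integrable_const _)]
        simp
      rw [e]
      refine (abs_integral_le_integral_abs).trans ?_
      calc ∫ x, |b x * b (T^[n] x) - c * c| ∂μ
          ≤ ∫ x, (|b x - c| + |b (T^[n] x) - c|) ∂μ := by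
            refine integral_mono (hbb.sub (integrable_const _)).abs (hbi.add hbTi) fun x => ?_
            have : b x * b (T^[n] x) - c * c = (b x - c) * b (T^[n] x) + c * (b (T^[n] x) - c) := by
              ring
            simp only [this]
            refine (abs_add_le _ _).trans ?_
            rw [abs_mul, abs_mul, abs_of_nonneg (hb0 _), abs_of_nonneg hc0]
            have := mul_le_of_le_one_right (abs_nonneg (b x - c)) (hb1 (T^[n] x))
            have := mul_le_of_le_one_left (abs_nonneg (b (T^[n] x) - c)) hc1
            linarith
        _ = _ := integral_add hbi hbTi
        _ ≤ 2 * ε := by linarith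
    calc |c - c * c| ≤ _ := abs_sub_le _ (P.real (B ∩ R^[n] ⁻¹' B)) _
      _ ≤ 4 * ε := by linarith
  have hz : c - c * c = 0 := by
    by_contra h
    have h' := abs_pos.2 h
    have := main (|c - c * c| / 8) (by positivity)
    linarith
  have hcc : c = 0 ∨ c = 1 := by
    have : c * (1 - c) = 0 := by linarith
    rcases mul_eq_zero.1 this with h | h
    · exact Or.inl h
    · right; linarith
  rw [eventuallyConst_set']
  rcases hcc with h | h
  · left
    rw [ae_eq_empty]
    rw [h] at hPA
    exact (measureReal_eq_zero_iff).1 hPA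
  · right
    rw [ae_eq_univ, prob_compl_eq_zero_iff hA]
    rw [h, measureReal_def] at hPA
    exact (ENNReal.toReal_eq_one_iff _).1 hPA

end Bernoulli
end LargeEntropy

namespace LargeEntropy
open ProbabilityTheory

open Classical in
/-- Inductive choice of points avoiding the earlier ones. -/
noncomputable def pick {M : Type*} (c : ℕ → Finset M → M) : ℕ → M
  | n => c n (Finset.univ.image (fun i : Fin n => pick c i.1))
decreasing_by exact i.2

open Classical in
lemma exists_inj {M : Type*} (s : ℕ → Set M) (hs : ∀ n, (s n).Infinite) :
    ∃ q : ℕ → M, Function.Injective q ∧ ∀ n, q n ∈ s n := by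
  have h : ∀ (n : ℕ) (f : Finset M), ∃ a ∈ s n, a ∉ f := fun n f => (hs n).exists_notMem_finset f
  choose c hc1 hc2 using h
  refine ⟨pick c, ?_, fun n => by rw [pick]; exact hc1 _ _⟩
  have hlt : ∀ i j, i < j → pick c i ≠ pick c j := by
    intro i j hij heq
    apply hc2 j (Finset.univ.image (fun i : Fin j => pick c i.1))
    have : pick c j = c j (Finset.univ.image (fun i : Fin j => pick c i.1)) := by
      conv_lhs => rw [pick]
    rw [← this, ← heq]
    exact Finset.mem_image.2 ⟨⟨i, hij⟩, Finset.mem_univ _, rfl⟩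
  intro i j h
  rcases lt_trichotomy i j with h' | h' | h'
  · exact absurd h (hlt _ _ h')
  · exact h'
  · exact absurd h.symm (hlt _ _ h')

open Classical in
lemma exists_coding {M : Type*} [MetricSpace M] [TopologicalSpace.SeparableSpace M]
    [PerfectSpace M] [MeasurableSpace M] [BorelSpace M] [Nonempty M] (N : ℕ) [NeZero N]
    (ε : ℝ) (hε : 0 < ε) :
    ∃ (φ : M × Fin N → M) (g : M → Fin N), Measurable φ ∧ Measurable g ∧
      (∀ z, dist (φ z) z.1 ≤ ε) ∧ ∀ z, g (φ z) = z.2 := by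
  let u := TopologicalSpace.denseSeq M
  have hu : ∀ x : M, ∃ j : ℕ, dist x (u j) < ε / 2 := fun x =>
    (TopologicalSpace.denseRange_denseSeq M).exists_dist_lt x (by positivity)
  let e : ℕ × Fin N → ℕ := Encodable.encode
  obtain ⟨q, hq, hqs⟩ := exists_inj
    (fun n : ℕ => ball (u ((Encodable.decode (α := ℕ × Fin N) n).getD (0, 0)).1) (ε / 2))
    (fun n => infinite_of_mem_nhds _ (ball_mem_nhds _ (by positivity)))
  let p : ℕ × Fin N → M := fun z => q (Encodable.encode z)
  have hp : Function.Injective p := hq.comp Encodable.encode_injective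
  have hpd : ∀ z, dist (p z) (u z.1) < ε / 2 := by
    intro z
    have := hqs (Encodable.encode z)
    simpa using this
  let J : M → ℕ := fun x => Nat.find (hu x)
  have hJ : Measurable J := measurable_find hu fun k =>
    measurableSet_lt (by fun_prop) (by fun_prop)
  have hJd : ∀ x, dist x (u (J x)) < ε / 2 := fun x => Nat.find_spec (hu x)
  refine ⟨fun z => p (J z.1, z.2), Function.extend p Prod.snd (fun _ => 0), ?_, ?_, ?_, ?_⟩
  · exact (measurable_of_countable p).comp ((hJ.comp measurable_fst).prodMk measurable_snd)
  · refine (measurable_const (a := (0 : Fin N))).measurable_of_countable_ne ?_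
    refine (Set.countable_range p).mono fun x hx => ?_
    by_contra h
    apply hx
    rw [Function.extend_apply' _ _ _ h]
  · intro z
    have h1 := hpd (J z.1, z.2)
    have h2 := hJd z.1
    rw [dist_comm] at h2
    refine (dist_triangle _ (u (J z.1)) _).trans ?_
    have h1' : dist (p (J z.1, z.2)) (u (J z.1)) < ε / 2 := h1
    change dist (p (J z.1, z.2)) (u (J z.1)) + _ ≤ ε
    linarith
  · intro z
    rw [hp.extend_apply]

end LargeEntropy

namespace LargeEntropy
open ProbabilityTheory

/-- The uniform measure on `Fin N`. -/
noncomputable def unif (N : ℕ) [NeZero N] : Measure (Fin N) :=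
  (PMF.uniformOfFintype (Fin N)).toMeasure

instance (N : ℕ) [NeZero N] : IsProbabilityMeasure (unif N) := by unfold unif; infer_instance

lemma unif_singleton (N : ℕ) [NeZero N] (c : Fin N) : unif N {c} = (N : ℝ≥0∞)⁻¹ := by
  rw [unif, PMF.toMeasure_apply_singleton _ _ (measurableSet_singleton c)]
  simp

lemma bern_cyl (N : ℕ) [NeZero N] (n : ℕ) (c : Fin n → Fin N) :
    bern (unif N) {ω | (fun i : Fin n => ω (-(i : ℤ))) = c} = ((N : ℝ≥0∞)⁻¹) ^ n := by
  let c' : ℤ → Fin N := fun z => if h : (-z).toNat < n then c ⟨(-z).toNat, h⟩ else 0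
  let s : Finset ℤ := (Finset.univ : Finset (Fin n)).image fun i : Fin n => -((i : ℕ) : ℤ)
  have hinj : Function.Injective (fun i : Fin n => -((i : ℕ) : ℤ)) := by
    intro i j h
    simp only [neg_inj, Nat.cast_inj] at h
    exact Fin.ext h
  have hc' : ∀ i : Fin n, c' (-((i : ℕ) : ℤ)) = c i := by
    intro i
    simp [c']
  have : {ω : ℤ → Fin N | (fun i : Fin n => ω (-(i : ℤ))) = c} =
      Set.pi (s : Set ℤ) (fun z => {c' z}) := by
    ext ω
    simp only [Set.mem_ofPred_eq, Set.mem_pi, funext_iff, s, Finset.coe_image, Finset.coe_univ,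
      Set.image_univ, Set.forall_mem_range, Set.mem_singleton_iff, hc']
  rw [this, bern, Measure.infinitePi_pi _ (fun i _ => measurableSet_singleton _)]
  simp only [unif_singleton, Finset.prod_const, s]
  rw [Finset.card_image_of_injective _ hinj]
  simp

/-- The noise map. -/
def noise {M F : Type*} (φ : M × F → M) (z : (ℤ → M) × (ℤ → F)) : ℤ → M :=
  fun i => φ (z.1 i, z.2 i)

lemma measurable_noise {M F : Type*} [MeasurableSpace M] [MeasurableSpace F] {φ : M × F → M}
    (hφ : Measurable φ) : Measurable (noise φ) :=
  measurable_pi_lambda _ fun i => hφ.comp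
    (((measurable_pi_apply i).comp measurable_fst).prodMk
      ((measurable_pi_apply i).comp measurable_snd))

lemma entropy_noise {M : Type*} [MeasurableSpace M] (μ : Measure (ℤ → M)) [IsProbabilityMeasure μ]
    (N : ℕ) [NeZero N] (φ : M × Fin N → M) (g : M → Fin N) (hφ : Measurable φ) (hg : Measurable g)
    (hgφ : ∀ z, g (φ z) = z.2) :
    ENNReal.ofReal (Real.log N) ≤ kolmogorovSinaiEntropy fullShift
      ((μ.prod (bern (unif N))).map (noise φ)) := by
  have hf : Measurable (fun y : ℤ → M => g (y 0)) := hg.comp (measurable_pi_apply 0)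
  unfold kolmogorovSinaiEntropy
  refine le_trans (le_of_eq ?_) (le_iSup_of_le N (le_iSup_of_le (fun y => g (y 0))
    (le_iSup_of_le hf le_rfl)))
  congr 1
  symm
  refine Tendsto.liminf_eq ?_
  refine Tendsto.congr' ?_ tendsto_const_nhds
  filter_upwards [eventually_gt_atTop 0] with n hn
  have hN : (0 : ℝ) < N := by exact_mod_cast Nat.pos_of_ne_zero (NeZero.ne N)
  have hval : ∀ c : Fin n → Fin N, (((μ.prod (bern (unif N))).map (noise φ))
      ((fun x (i : Fin n) => g ((fullShift^[(i : ℕ)] x) 0)) ⁻¹' {c})).toReal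
      = ((N : ℝ) ^ n)⁻¹ := by
    intro c
    have hm : Measurable (fun (x : ℤ → M) (i : Fin n) => g ((fullShift^[(i : ℕ)] x) 0)) :=
      measurable_pi_lambda _ fun i => hf.comp (measurable_fullShift.iterate _)
    rw [Measure.map_apply (measurable_noise hφ) (hm (measurableSet_singleton c))]
    have : noise φ ⁻¹' ((fun x (i : Fin n) => g ((fullShift^[(i : ℕ)] x) 0)) ⁻¹' {c})
        = Set.univ ×ˢ {ω : ℤ → Fin N | (fun i : Fin n => ω (-(i : ℤ))) = c} := by
      ext z
      simp [fullShift_iterate, noise, hgφ]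
    rw [this, Measure.prod_prod, bern_cyl]
    simp
  unfold partitionEntropy
  rw [Finset.sum_congr rfl fun c _ => by rw [hval c]]
  rw [Finset.sum_const, Finset.card_univ, Fintype.card_fun, Fintype.card_fin, Fintype.card_fin,
    nsmul_eq_mul, Real.negMulLog, Real.log_inv, Real.log_pow]
  have hn' : (n : ℝ) ≠ 0 := by exact_mod_cast hn.ne'
  push_cast
  field_simp

lemma ergodic_noise {M F : Type*} [MeasurableSpace M] [MeasurableSpace F] (p : Measure F)
    [IsProbabilityMeasure p] (μ : Measure (ℤ → M)) [IsProbabilityMeasure μ]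
    (hμ : Ergodic fullShift μ) {φ : M × F → M} (hφ : Measurable φ) :
    Ergodic fullShift ((μ.prod (bern p)).map (noise φ)) :=
  ((measurable_noise hφ).measurePreserving _).ergodic_of_ergodic_semiconj (ergodic_prod p hμ)
    measurable_fullShift fun _ => rfl

lemma tendsto_noise {M F : Type*} [MetricSpace M] [TopologicalSpace.SeparableSpace M]
    [MeasurableSpace M] [BorelSpace M] [MeasurableSpace F]
    (p : Measure F) [IsProbabilityMeasure p] (μ : ProbabilityMeasure (ℤ → M))
    (φ : ℕ → M × F → M) (hφ : ∀ k, Measurable (φ k))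
    (hd : ∀ k z, dist (φ k z) z.1 ≤ 1 / ((k : ℝ) + 1)) (ν : ℕ → ProbabilityMeasure (ℤ → M))
    (hν : ∀ k, (ν k).toMeasure = (μ.toMeasure.prod (bern p)).map (noise (φ k))) :
    Tendsto ν atTop (𝓝 μ) := by
  have : SecondCountableTopology M := UniformSpace.secondCountable_of_separable M
  rw [ProbabilityMeasure.tendsto_iff_forall_integral_tendsto]
  intro f
  have e1 : ∀ k, ∫ y, f y ∂(ν k).toMeasure
      = ∫ z, f (noise (φ k) z) ∂(μ.toMeasure.prod (bern p)) := by
    intro k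
    rw [hν, integral_map (measurable_noise (hφ k)).aemeasurable
      f.continuous.measurable.aestronglyMeasurable]
  have e2 : ∫ y, f y ∂μ.toMeasure = ∫ z, f z.1 ∂(μ.toMeasure.prod (bern p)) := by
    have := integral_map (μ := μ.toMeasure.prod (bern p)) measurable_fst.aemeasurable
      (f := f) f.continuous.measurable.aestronglyMeasurable
    rw [← this, Measure.map_fst_prod]
    simp
  simp only [e1, e2]
  refine tendsto_integral_of_dominated_convergence (fun _ => ‖f‖) ?_ (integrable_const _) ?_ ?_
  · intro k
    exact (f.continuous.measurable.comp (measurable_noise (hφ k))).aestronglyMeasurable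
  · intro k
    exact ae_of_all _ fun z => f.norm_coe_le_norm _
  · refine ae_of_all _ fun z => (f.continuous.tendsto _).comp ?_
    rw [tendsto_pi_nhds]
    intro i
    rw [tendsto_iff_dist_tendsto_zero]
    exact squeeze_zero (fun _ => dist_nonneg) (fun k => hd k (z.1 i, z.2 i))
      tendsto_one_div_add_atTop_nhds_zero_nat

end LargeEntropy


/-- For the full shift on `ℤ → M` over a perfect Polish metric space `M`,
for every `L > 0` the set of ergodic invariant measures with metric entropy at least `L` is
dense in `M_e` (with the topology induced by the weak topology). -/
theorem fullShift_largeEntropy_dense {M : Type*} [MetricSpace M] [CompleteSpace M]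
    [TopologicalSpace.SeparableSpace M] [PerfectSpace M]
    [MeasurableSpace M] [BorelSpace M] (L : ℝ) (hL : 0 < L) :
    Dense {μ : {ν : ProbabilityMeasure (ℤ → M) // Ergodic fullShift ν.toMeasure} |
        ENNReal.ofReal L ≤ kolmogorovSinaiEntropy fullShift μ.1.toMeasure} := by
  open LargeEntropy in
  intro μ
  obtain ⟨N₀, hN₀⟩ := exists_nat_ge (Real.exp L)
  have hNpos : (0 : ℝ) < N₀ := (Real.exp_pos L).trans_le hN₀
  haveI : NeZero N₀ := ⟨fun h => by simp [h] at hNpos⟩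
  have hlog : L ≤ Real.log N₀ := (Real.le_log_iff_exp_le hNpos).2 hN₀
  have hne : Nonempty (ℤ → M) := μ.1.toMeasure.nonempty_of_neZero
  haveI : Nonempty M := ⟨hne.some 0⟩
  have hex := fun k : ℕ => exists_coding (M := M) N₀ (1 / ((k : ℝ) + 1)) (by positivity)
  choose φ g hφ hg hd hgφ using hex
  let ν : ℕ → ProbabilityMeasure (ℤ → M) := fun k =>
    ⟨(μ.1.toMeasure.prod (bern (unif N₀))).map (noise (φ k)),
      Measure.isProbabilityMeasure_map (measurable_noise (hφ k)).aemeasurable⟩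
  have herg : ∀ k, Ergodic fullShift (ν k).toMeasure := fun k =>
    ergodic_noise (unif N₀) μ.1.toMeasure μ.2 (hφ k)
  have hlim : Tendsto ν atTop (𝓝 μ.1) :=
    tendsto_noise (unif N₀) μ.1 φ hφ hd ν fun k => rfl
  refine mem_closure_of_tendsto (f := fun k => (⟨ν k, herg k⟩ :
    {ν : ProbabilityMeasure (ℤ → M) // Ergodic fullShift ν.toMeasure})) (b := atTop)
    (tendsto_subtype_rng.2 hlim) (Eventually.of_forall fun k => ?_)
  exact (ENNReal.ofReal_le_ofReal hlog).trans
    (entropy_noise μ.1.toMeasure N₀ (φ k) (g k) (hφ k) (hg k) (hgφ k))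
end

section
/- For the full shift T on X = ∏_{n∈ℤ} M over a perfect Polish metric space M, for every L > 0 the set {μ ∈ M_e : d̄_μ(x) ≥ L for μ-a.e. x ∈ X} (equivalently, {μ ∈ M_e : dim_P^-(μ) ≥ L}) is dense in M_e (with the topology induced from the weak topology on M(T)). -/
open Filter MeasureTheory Topology Metric Set
open scoped ENNReal NNReal

noncomputable section
attribute [local instance] Classical.propDecidable

end

section Aux

variable {E : Type*} [MeasurableSpace E] (p : Measure E) [IsProbabilityMeasure p]

lemma measurable_fullShift' : Measurable (fullShift (M := E)) := by
  unfold fullShift; fun_prop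

lemma mp_fullShift : MeasurePreserving (fullShift (M := E))
    (Measure.infinitePi (fun _ : ℤ => p)) (Measure.infinitePi (fun _ : ℤ => p)) :=
  ⟨measurable_fullShift', Measure.map_infinitePi_infinitePi_of_inj
    (P := fun _ : ℤ => p) (f := fun i : ℤ => i - 1) (sub_left_injective)⟩

lemma fullShift_iterate (n : ℕ) (x : ℤ → E) (i : ℤ) :
    (fullShift^[n] x) i = x (i - n) := by
  induction n generalizing x with
  | zero => simp
  | succ n ih =>
    rw [Function.iterate_succ_apply, ih, fullShift]
    congr 1; push_cast; ring

/-- sets depending on finitely many coordinates of the second factor -/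
def cylAlg (X E : Type*) [MeasurableSpace X] [MeasurableSpace E] : Set (Set (X × (ℤ → E))) :=
  {B | ∃ (S : Finset ℤ) (C : Set (X × (S → E))), MeasurableSet C ∧
    B = (fun z : X × (ℤ → E) => (z.1, fun i : S => z.2 i)) ⁻¹' C}

lemma cylAlg_mono {X : Type*} [MeasurableSpace X] {S S' : Finset ℤ} (h : S ⊆ S')
    {C : Set (X × (S → E))} (hC : MeasurableSet C) :
    ∃ C' : Set (X × (S' → E)), MeasurableSet C' ∧
      (fun z : X × (ℤ → E) => (z.1, fun i : S => z.2 i)) ⁻¹' C =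
      (fun z : X × (ℤ → E) => (z.1, fun i : S' => z.2 i)) ⁻¹' C' := by
  refine ⟨(fun z : X × (S' → E) => (z.1, fun i : S => z.2 ⟨i, h i.2⟩)) ⁻¹' C, ?_, rfl⟩
  exact (by fun_prop : Measurable fun z : X × (S' → E) => (z.1, fun i : S => z.2 ⟨i, h i.2⟩)) hC

lemma isSetAlgebra_cylAlg (X : Type*) [MeasurableSpace X] : IsSetAlgebra (cylAlg X E) where
  empty_mem := ⟨∅, ∅, MeasurableSet.empty, rfl⟩
  compl_mem := by
    rintro _ ⟨S, C, hC, rfl⟩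
    exact ⟨S, Cᶜ, hC.compl, rfl⟩
  union_mem := by
    classical
    rintro _ _ ⟨S, C, hC, rfl⟩ ⟨S', C', hC', rfl⟩
    obtain ⟨D, hD, e⟩ := cylAlg_mono (Finset.subset_union_left (s₁ := S) (s₂ := S')) hC
    obtain ⟨D', hD', e'⟩ := cylAlg_mono (Finset.subset_union_right (s₁ := S) (s₂ := S')) hC'
    exact ⟨S ∪ S', D ∪ D', hD.union hD', by rw [e, e']; rfl⟩

lemma generate_cylAlg (X : Type*) [mX : MeasurableSpace X] :
    (inferInstance : MeasurableSpace (X × (ℤ → E))) = MeasurableSpace.generateFrom (cylAlg X E) := by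
  apply le_antisymm
  · have h1 : Measurable[MeasurableSpace.generateFrom (cylAlg X E)]
        (Prod.fst : X × (ℤ → E) → X) := by
      intro s hs
      refine MeasurableSpace.measurableSet_generateFrom
        ⟨∅, Prod.fst ⁻¹' s, measurable_fst hs, rfl⟩
    have h2 : Measurable[MeasurableSpace.generateFrom (cylAlg X E)]
        (Prod.snd : X × (ℤ → E) → ℤ → E) := by
      refine @measurable_pi_lambda _ _ _ (MeasurableSpace.generateFrom (cylAlg X E)) _ _ ?_
      intro i s hs
      refine MeasurableSpace.measurableSet_generateFrom
        ⟨{i}, (fun z => z.2 ⟨i, by simp⟩) ⁻¹' s, ?_, rfl⟩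
      exact (by fun_prop : Measurable fun z : X × (({i} : Finset ℤ) → E) => z.2 ⟨i, by simp⟩) hs
    exact sup_le h1.comap_le h2.comap_le
  · apply MeasurableSpace.generateFrom_le
    rintro _ ⟨S, C, hC, rfl⟩
    exact (by fun_prop : Measurable
      fun z : X × (ℤ → E) => (z.1, fun i : S => z.2 i)) hC

lemma indep_cyl {S S' : Finset ℤ} (h : Disjoint S S') {C : Set (S → E)} {C' : Set (S' → E)}
    (hC : MeasurableSet C) (hC' : MeasurableSet C') :
    (Measure.infinitePi (fun _ : ℤ => p)).real
      ({ξ | (fun i : S => ξ i) ∈ C} ∩ {ξ | (fun i : S' => ξ i) ∈ C'}) =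
    (Measure.infinitePi (fun _ : ℤ => p)).real {ξ | (fun i : S => ξ i) ∈ C} *
    (Measure.infinitePi (fun _ : ℤ => p)).real {ξ | (fun i : S' => ξ i) ∈ C'} := by
  have h1 := ProbabilityTheory.iIndepFun_infinitePi (P := fun _ : ℤ => p)
    (X := fun _ e => e) (fun _ => measurable_id)
  have h2 := h1.indepFun_finset S S' h (fun i => measurable_pi_apply i)
  have h3 := h2.measure_inter_preimage_eq_mul C C' hC hC'
  simp only [Measure.real]
  rw [← ENNReal.toReal_mul]
  exact congrArg _ h3

/-- The decorrelation identity for cylinder sets. -/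
lemma cyl_decor {X : Type*} [MeasurableSpace X] {T : X → X} 
    (B : Set (X × (ℤ → E))) (hB : B ∈ cylAlg X E) :
    ∃ n : ℕ, ∀ x,
      (Measure.infinitePi (fun _ : ℤ => p)).real
        (Prod.mk x ⁻¹' (B ∩ (Prod.map T fullShift)^[n] ⁻¹' B)) =
      (Measure.infinitePi (fun _ : ℤ => p)).real (Prod.mk x ⁻¹' B) *
      (Measure.infinitePi (fun _ : ℤ => p)).real (Prod.mk (T^[n] x) ⁻¹' B) := by
  classical
  obtain ⟨S, C, hC, rfl⟩ := hB
  let N := S.sup Int.natAbs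
  have hN : ∀ i ∈ S, i.natAbs ≤ N := fun i hi => Finset.le_sup (f := Int.natAbs) hi
  refine ⟨2 * N + 1, fun x => ?_⟩
  set n := 2 * N + 1 with hn
  let S' := S.image (fun i => i - (n : ℤ))
  have hdisj : Disjoint S S' := by
    rw [Finset.disjoint_left]
    intro i hi hi'
    obtain ⟨j, hj, rfl⟩ := Finset.mem_image.1 hi'
    have := hN _ hi
    have := hN _ hj
    omega
  have hmem : ∀ i : S, (i : ℤ) - n ∈ S' := fun i => Finset.mem_image_of_mem _ i.2
  let C1 : Set (S → E) := Prod.mk x ⁻¹' C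
  let C2 : Set (S → E) := Prod.mk (T^[n] x) ⁻¹' C
  have hC1 : MeasurableSet C1 := measurable_prodMk_left hC
  have hC2 : MeasurableSet C2 := measurable_prodMk_left hC
  let C3 : Set (S' → E) := (fun η => fun i : S => η ⟨(i : ℤ) - n, hmem i⟩) ⁻¹' C2
  have hC3 : MeasurableSet C3 := (by fun_prop :
    Measurable (fun (η : S' → E) => fun i : S => η ⟨(i : ℤ) - n, hmem i⟩)) hC2
  have h := indep_cyl p hdisj hC1 hC3
  have e3 : {ξ : ℤ → E | (fun i : S' => ξ i) ∈ C3} =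
      fullShift^[n] ⁻¹' {ξ : ℤ → E | (fun i : S => ξ i) ∈ C2} := by
    ext ξ
    simp only [C3, mem_ofPred_eq, mem_preimage, fullShift_iterate]
  have e4 := ((mp_fullShift p).iterate n).measureReal_preimage
    (s := {ξ : ℤ → E | (fun i : S => ξ i) ∈ C2}) (by
      apply MeasurableSet.nullMeasurableSet
      exact (by fun_prop : Measurable fun ξ : ℤ → E => fun i : S => ξ i) hC2)
  rw [e3, e4] at h
  rw [Prod.map_iterate]
  exact h

lemma ergodic_prod {X : Type*} [MeasurableSpace X] {T : X → X} {μ : Measure X}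
    [IsProbabilityMeasure μ] (hT : Ergodic T μ) :
    Ergodic (Prod.map T (fullShift (M := E))) (μ.prod (Measure.infinitePi (fun _ : ℤ => p))) := by
  have hR := hT.toMeasurePreserving.prod (mp_fullShift p)
  refine ⟨hR, ⟨fun A hA hinv => ?_⟩⟩
  set Q := Measure.infinitePi (fun _ : ℤ => p) with hQ
  set m := μ.prod Q with hm
  let u : Set (X × (ℤ → E)) → X → ℝ := fun B x => Q.real (Prod.mk x ⁻¹' B)
  have um : ∀ B, MeasurableSet B → Measurable (u B) := fun B hB =>
    (measurable_measure_prodMk_left hB).ennreal_toReal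
  have u0 : ∀ B x, 0 ≤ u B x := fun B x => measureReal_nonneg
  have u1 : ∀ B x, u B x ≤ 1 := fun B x => measureReal_le_one
  have ui : ∀ B, MeasurableSet B → Integrable (u B) μ := fun B hB =>
    Integrable.of_bound (um B hB).aestronglyMeasurable 1
      (Eventually.of_forall fun x => by rw [Real.norm_of_nonneg (u0 B x)]; exact u1 B x)
  have uint : ∀ B, MeasurableSet B → ∫ x, u B x ∂μ = m.real B := by
    intro B hB
    simp only [u, Measure.real]
    rw [hm, Measure.prod_apply hB, integral_toReal (measurable_measure_prodMk_left hB).aemeasurable]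
    exact Eventually.of_forall fun x => measure_lt_top _ _
  -- fibre measure is invariant
  have uA : u A ∘ T = u A := by
    funext x
    have := (mp_fullShift p).measureReal_preimage (s := Prod.mk (T x) ⁻¹' A)
      (measurable_prodMk_left hA).nullMeasurableSet
    simp only [Function.comp, u]
    rw [← hQ] at this
    rw [← this]
    conv_rhs => rw [← hinv]
    rfl
  obtain ⟨c, hc⟩ := hT.toPreErgodic.ae_eq_const_of_ae_eq_comp (um A hA) uA
  set a := m.real A with ha
  have hca : c = a := by
    rw [ha, ← uint A hA, integral_congr_ae hc]; simp
  subst hca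
  have ha0 : 0 ≤ a := measureReal_nonneg
  have ha1 : a ≤ 1 := measureReal_le_one
  have key : ∀ ε : ℝ, 0 < ε → |a - a * a| ≤ 4 * ε := by
    intro ε hε
    obtain ⟨B, hB, hAB⟩ := (Measure.MeasureDense.of_generateFrom_isSetAlgebra_finite m
      (isSetAlgebra_cylAlg X) (generate_cylAlg X)).approx A hA (measure_ne_top _ _) ε hε
    have hBm : MeasurableSet B := by
      have := generate_cylAlg (E := E) X
      rw [show MeasurableSet B ↔ MeasurableSet[MeasurableSpace.generateFrom (cylAlg X E)] B by
        rw [← this]]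
      exact MeasurableSpace.measurableSet_generateFrom hB
    have hD : MeasurableSet (symmDiff A B) := hA.symmDiff hBm
    have hAB' : m.real (symmDiff A B) < ε := by
      rw [Measure.real]
      exact (ENNReal.lt_ofReal_iff_toReal_lt (measure_ne_top _ _)).1 hAB
    obtain ⟨n, hn⟩ := cyl_decor p (T := T) B hB
    set R := Prod.map T (fullShift (M := E)) with hRdef
    have hRn := hR.iterate n
    have hinvn : R^[n] ⁻¹' A = A := Function.IsFixedPt.preimage_iterate hinv n
    have hBn : MeasurableSet (R^[n] ⁻¹' B) := hRn.measurable hBm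
    have hTn := hT.toMeasurePreserving.iterate n
    -- first estimate
    have est1 : |a - m.real (B ∩ R^[n] ⁻¹' B)| ≤ 2 * ε := by
      have h1 : m.real (R^[n] ⁻¹' (symmDiff A B)) = m.real (symmDiff A B) :=
        hRn.measureReal_preimage hD.nullMeasurableSet
      have h2 : m.real (symmDiff A B ∪ R^[n] ⁻¹' (symmDiff A B)) ≤ 2 * ε := by
        refine (measureReal_union_le _ _).trans ?_
        rw [h1]; linarith
      have hs : ∀ z, z ∈ R^[n] ⁻¹' A ↔ z ∈ A := fun z => by rw [hinvn]
      have h3 : a ≤ m.real (B ∩ R^[n] ⁻¹' B) + m.real (symmDiff A B ∪ R^[n] ⁻¹' (symmDiff A B)) := by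
        refine le_trans (measureReal_mono ?_) (measureReal_union_le _ _)
        intro z hz
        have := hs z
        simp only [mem_union, mem_inter_iff, mem_preimage, mem_symmDiff] at *
        tauto
      have h4 : m.real (B ∩ R^[n] ⁻¹' B) ≤ a + m.real (symmDiff A B ∪ R^[n] ⁻¹' (symmDiff A B)) := by
        refine le_trans (measureReal_mono ?_) (measureReal_union_le _ _)
        intro z hz
        have := hs z
        simp only [mem_union, mem_inter_iff, mem_preimage, mem_symmDiff] at *
        tauto
      rw [abs_le]; constructor <;> linarith
    -- second estimate
    have hD1 : ∀ x, |u A x - u B x| ≤ u (symmDiff A B) x := by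
      intro x
      have h3 : u A x ≤ u B x + u (symmDiff A B) x := by
        refine le_trans (measureReal_mono ?_) (measureReal_union_le _ _)
        intro z hz
        simp only [mem_union, mem_preimage, mem_symmDiff] at *
        tauto
      have h4 : u B x ≤ u A x + u (symmDiff A B) x := by
        refine le_trans (measureReal_mono ?_) (measureReal_union_le _ _)
        intro z hz
        simp only [mem_union, mem_preimage, mem_symmDiff] at *
        tauto
      rw [abs_le]; constructor <;> linarith
    have hcn : ∀ᵐ x ∂μ, u A (T^[n] x) = a := hTn.quasiMeasurePreserving.ae hc
    have hi1 := ui _ hD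
    have hi2 : Integrable (fun x => u (symmDiff A B) (T^[n] x)) μ :=
      hTn.integrable_comp_of_integrable hi1
    have hv : ∫ x, u (symmDiff A B) (T^[n] x) ∂μ = m.real (symmDiff A B) := by
      rw [← uint _ hD]
      conv_rhs => rw [← hTn.map_eq]
      rw [integral_map hTn.measurable.aemeasurable (um _ hD).aestronglyMeasurable]
    have hip : Integrable (u (B ∩ R^[n] ⁻¹' B)) μ := ui _ (hBm.inter hBn)
    have est2 : |a * a - m.real (B ∩ R^[n] ⁻¹' B)| ≤ 2 * ε := by
      have e1 : a * a - m.real (B ∩ R^[n] ⁻¹' B) = ∫ x, (a * a - u (B ∩ R^[n] ⁻¹' B) x) ∂μ := by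
        rw [integral_sub (integrable_const _) hip, uint _ (hBm.inter hBn)]; simp
      rw [e1]
      refine (abs_integral_le_integral_abs).trans ?_
      have e2 : ∫ x, |a * a - u (B ∩ R^[n] ⁻¹' B) x| ∂μ ≤
          ∫ x, (u (symmDiff A B) x + u (symmDiff A B) (T^[n] x)) ∂μ := by
        refine integral_mono_ae ((integrable_const _).sub hip).abs (hi1.add hi2) ?_
        filter_upwards [hc, hcn] with x hx hx'
        have q1 := hD1 x
        have q2 := hD1 (T^[n] x)
        have q3 : u (B ∩ R^[n] ⁻¹' B) x = u B x * u B (T^[n] x) := hn x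
        have hx2 : u A x = a := hx
        rw [hx2] at q1; rw [hx'] at q2
        rw [q3]
        have : a * a - u B x * u B (T^[n] x) =
          a * (a - u B (T^[n] x)) + (a - u B x) * u B (T^[n] x) := by ring
        rw [this]
        refine (abs_add_le _ _).trans ?_
        rw [abs_mul, abs_mul, abs_of_nonneg ha0, abs_of_nonneg (u0 B _)]
        have := u1 B (T^[n] x)
        have := u0 B (T^[n] x)
        nlinarith [abs_nonneg (a - u B x), abs_nonneg (a - u B (T^[n] x))]
      refine e2.trans ?_
      rw [integral_add hi1 hi2, hv, uint _ hD]
      linarith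
    have := abs_sub_abs_le_abs_sub a (a*a)
    rw [abs_le] at *
    constructor <;> linarith [est1.1, est1.2, est2.1, est2.2]
  have hz : a - a * a = 0 := by
    by_contra hne
    have hp := abs_pos.2 hne
    have := key (|a - a * a| / 8) (by positivity)
    linarith
  have hz' : a = 0 ∨ a = 1 := by
    have : a * (1 - a) = 0 := by linarith
    rcases mul_eq_zero.1 this with h | h
    · exact Or.inl h
    · exact Or.inr (by linarith)
  rw [eventuallyConst_set']
  rcases hz' with h | h
  · left
    rw [ae_eq_empty]
    exact (measureReal_eq_zero_iff).1 h
  · right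
    rw [ae_eq_univ, ← measureReal_eq_zero_iff, probReal_compl_eq_one_sub hA]
    linarith

end Aux
section Aux2

variable {M : Type*} [MetricSpace M]

lemma summable_half_natAbs : Summable fun n : ℤ => (1 / 2 : ℝ) ^ n.natAbs := by
  apply Summable.of_nat_of_neg
  · simpa using summable_geometric_two
  · simpa using summable_geometric_two

lemma shiftDist_term_le (x y : ℤ → M) (i : ℤ) :
    (1 / 2 : ℝ) ^ i.natAbs * (dist (x i) (y i) / (1 + dist (x i) (y i))) ≤ shiftDist x y := by
  have h0 : ∀ n : ℤ, 0 ≤ (1 / 2 : ℝ) ^ n.natAbs * (dist (x n) (y n) / (1 + dist (x n) (y n))) :=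
    fun n => by positivity
  have hs : Summable fun n : ℤ =>
      (1 / 2 : ℝ) ^ n.natAbs * (dist (x n) (y n) / (1 + dist (x n) (y n))) := by
    refine Summable.of_nonneg_of_le h0 (fun n => ?_) summable_half_natAbs
    refine mul_le_of_le_one_right (by positivity) ?_
    rw [div_le_one (by positivity)]
    linarith
  exact hs.le_tsum i (fun j _ => h0 j)

lemma dist_lt_of_shiftDist_lt {x y : ℤ → M} {δ : ℝ} (hδ : 0 < δ) {n : ℕ}
    (h : shiftDist x y < (1 / 2 : ℝ) ^ n * (δ / (1 + δ))) {i : ℤ} (hi : i.natAbs ≤ n) :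
    dist (x i) (y i) < δ := by
  have h1 := (shiftDist_term_le x y i).trans_lt h
  have h2 : (1 / 2 : ℝ) ^ n ≤ (1 / 2 : ℝ) ^ i.natAbs :=
    pow_le_pow_of_le_one (by norm_num) (by norm_num) hi
  have h3 : (1 / 2 : ℝ) ^ n * (δ / (1 + δ)) ≤ (1 / 2 : ℝ) ^ i.natAbs * (δ / (1 + δ)) :=
    mul_le_mul_of_nonneg_right h2 (by positivity)
  have h4 := lt_of_mul_lt_mul_left (h1.trans_le h3) (by positivity)
  have hd : 0 ≤ dist (x i) (y i) := dist_nonneg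
  rw [div_lt_div_iff₀ (by positivity) (by positivity)] at h4
  nlinarith

/-- uniform measure on `Fin K` -/
noncomputable def unif (K : ℕ) [NeZero K] : Measure (Fin K) :=
  (PMF.uniformOfFintype (Fin K)).toMeasure

instance (K : ℕ) [NeZero K] : IsProbabilityMeasure (unif K) := by
  unfold unif; infer_instance

lemma unif_subsingleton (K : ℕ) [NeZero K] {s : Set (Fin K)} (hs : s.Subsingleton) :
    unif K s ≤ (K : ℝ≥0∞)⁻¹ := by
  rcases hs.eq_empty_or_singleton with rfl | ⟨k, rfl⟩
  · simp
  · rw [unif, PMF.toMeasure_apply_singleton _ _ (measurableSet_singleton k)]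
    simp

lemma upperLocalDim_ge {X : Type*} [MeasurableSpace X] (d : X → X → ℝ) (ν : Measure X)
    [IsProbabilityMeasure ν] (x : X) (L t : ℝ) (hL : 0 < L) (K : ℕ) (hK : L ≤ Real.log K)
    (ht0 : 0 < t) (ht1 : t < 1)
    (h : ∀ n : ℕ, ν {y | d x y < (1 / 2 : ℝ) ^ n * t} ≤ ((K : ℝ≥0∞)⁻¹) ^ (2 * n + 1)) :
    ENNReal.ofReal L ≤ upperLocalDim d ν x := by
  unfold upperLocalDim
  split_ifs with hz
  · exact le_top
  push Not at hz
  have hK0 : 0 < K := by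
    rcases Nat.eq_zero_or_pos K with rfl | h
    · simp at hK; linarith
    · exact h
  have htend : Tendsto (fun n : ℕ => (1 / 2 : ℝ) ^ n * t) atTop (𝓝[>] 0) := by
    rw [tendsto_nhdsWithin_iff]
    refine ⟨?_, Eventually.of_forall fun n => by simp only [mem_Ioi]; positivity⟩
    simpa using (tendsto_pow_atTop_nhds_zero_of_lt_one (by norm_num : (0:ℝ) ≤ 1 / 2)
      (by norm_num)).mul_const t
  refine le_limsup_of_frequently_le' ?_
  refine htend.frequently (Eventually.frequently ?_)
  obtain ⟨N, hN⟩ := exists_nat_ge (-Real.log t)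
  filter_upwards [eventually_ge_atTop N, eventually_ge_atTop 1] with n hn hn1
  apply ENNReal.ofReal_le_ofReal
  have hpos : 0 < (ν {y | d x y < (1 / 2 : ℝ) ^ n * t}).toReal :=
    ENNReal.toReal_pos (hz _ (by positivity)) (measure_ne_top _ _)
  have hle : (ν {y | d x y < (1 / 2 : ℝ) ^ n * t}).toReal ≤ ((K : ℝ)⁻¹) ^ (2 * n + 1) := by
    have := ENNReal.toReal_mono (by simp [hK0.ne']) (h n)
    simpa using this
  have hlog := Real.log_le_log hpos hle
  rw [Real.log_pow, Real.log_inv] at hlog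
  have hle' : Real.log ((1 / 2 : ℝ) ^ n * t) = - (n * Real.log 2) + Real.log t := by
    rw [Real.log_mul (by positivity) ht0.ne', Real.log_pow, one_div, Real.log_inv]; ring
  have hl2 : Real.log 2 < 1 := by linarith [Real.log_two_lt_d9]
  have hl2' : 0 < Real.log 2 := Real.log_pos (by norm_num)
  have hlt : Real.log t < 0 := Real.log_neg ht0 ht1
  have hnN : (N : ℝ) ≤ n := by exact_mod_cast hn
  have hn1' : (1 : ℝ) ≤ n := by exact_mod_cast hn1
  have hneg : Real.log ((1 / 2 : ℝ) ^ n * t) < 0 := by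
    rw [hle']; nlinarith
  rw [le_div_iff_of_neg hneg, hle']
  push_cast at hlog
  refine hlog.trans ?_
  have a1 : (n : ℝ) * Real.log 2 ≤ n := by nlinarith
  have a2 : L * (n * Real.log 2 - Real.log t) ≤ L * (2 * n + 1) :=
    mul_le_mul_of_nonneg_left (by linarith) hL.le
  have a3 : L * (2 * n + 1) ≤ Real.log K * (2 * n + 1) :=
    mul_le_mul_of_nonneg_right hK (by positivity)
  nlinarith

lemma exists_pts [PerfectSpace M] (q : M) (r : ℝ) (hr : 0 < r) (K : ℕ) :
    ∃ f : Fin K → M, Function.Injective f ∧ ∀ k, dist (f k) q < r := by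
  have : NeBot (𝓝[≠] q) := by
    have := (PerfectSpace.univ_preperfect (α := M)) q (mem_univ q)
    simpa [AccPt] using this
  have hinf := infinite_of_mem_nhds q (ball_mem_nhds q hr)
  let e := hinf.natEmbedding
  exact ⟨fun k => (e k : M), fun a b h => Fin.ext (e.injective (Subtype.ext h)),
    fun k => (e k).2⟩

variable [MeasurableSpace M] 

/-- the perturbation map -/
def pert {K : ℕ} (φ : M → Fin K → M) (z : (ℤ → M) × (ℤ → Fin K)) : ℤ → M :=
  fun i => φ (z.1 i) (z.2 i)

lemma measurable_pert {K : ℕ} {φ : M → Fin K → M} (hφ : Measurable (fun z : M × Fin K => φ z.1 z.2)) :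
    Measurable (pert φ) := by
  refine measurable_pi_lambda _ fun i => ?_
  exact hφ.comp (by fun_prop :
    Measurable fun z : (ℤ → M) × (ℤ → Fin K) => (z.1 i, z.2 i))

lemma pert_ball [BorelSpace M] [SecondCountableTopology M] {K : ℕ} [NeZero K] {φ : M → Fin K → M} (hφ : Measurable (fun z : M × Fin K => φ z.1 z.2))
    (μ : Measure (ℤ → M)) [IsProbabilityMeasure μ] {δ : ℝ} (hδ : 0 < δ)
    (hsep : ∀ x k k', k ≠ k' → 2 * δ ≤ dist (φ x k) (φ x k')) (y : ℤ → M) (n : ℕ) :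
    ((μ.prod (Measure.infinitePi (fun _ : ℤ => unif K))).map (pert φ))
      {y' | shiftDist y y' < (1 / 2 : ℝ) ^ n * (δ / (1 + δ))} ≤ ((K : ℝ≥0∞)⁻¹) ^ (2 * n + 1) := by
  let S := Finset.Icc (-(n : ℤ)) n
  have hS : S.card = 2 * n + 1 := by simp [S]; omega
  let W : Set (ℤ → M) := (S : Set ℤ).pi fun i => ball (y i) δ
  have hW : MeasurableSet W := MeasurableSet.pi S.countable_toSet fun i _ => measurableSet_ball
  have hsub : {y' | shiftDist y y' < (1 / 2 : ℝ) ^ n * (δ / (1 + δ))} ⊆ W := by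
    intro y' hy' i hi
    rw [mem_ball, dist_comm]
    refine dist_lt_of_shiftDist_lt hδ hy' ?_
    simp [S] at hi
    omega
  refine (measure_mono hsub).trans ?_
  rw [Measure.map_apply (measurable_pert hφ) hW, Measure.prod_apply (measurable_pert hφ hW)]
  calc _ ≤ ∫⁻ x, ((K : ℝ≥0∞)⁻¹) ^ (2 * n + 1) ∂μ := by
        refine lintegral_mono fun x => ?_
        have e : Prod.mk x ⁻¹' (pert φ ⁻¹' W) =
          (S : Set ℤ).pi fun i => {k | φ (x i) k ∈ ball (y i) δ} := by
          ext ξ; simp [W, pert, Set.mem_pi]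
        rw [e, Measure.infinitePi_pi _ (fun i _ => MeasurableSet.of_discrete), ← hS]
        refine Finset.prod_le_pow_card _ _ _ fun i _ => ?_
        apply unif_subsingleton
        intro k hk k' hk'
        by_contra hne
        have h1 := hsep (x i) k k' hne
        have h2 : dist (φ (x i) k) (y i) < δ := hk
        have h3 : dist (φ (x i) k') (y i) < δ := hk'
        have := dist_triangle_right (φ (x i) k) (φ (x i) k') (y i)
        linarith
    _ = _ := by simp

end Aux2
section Aux3
variable {M : Type*} [MetricSpace M]

lemma exists_maps [SecondCountableTopology M] [PerfectSpace M] [Nonempty M]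
    [MeasurableSpace M] [BorelSpace M] (K : ℕ) :
    ∃ φ : ℕ → M → Fin K → M, (∀ m, Measurable (fun z : M × Fin K => φ m z.1 z.2)) ∧
      (∀ m, ∃ δ > 0, ∀ x k k', k ≠ k' → 2 * δ ≤ dist (φ m x k) (φ m x k')) ∧
      (∀ x (k : ℕ → Fin K), Tendsto (fun m => φ m x (k m)) atTop (𝓝 x)) := by
  let q := TopologicalSpace.denseSeq M
  have hp : ∀ m j : ℕ, ∃ f : Fin K → M, Function.Injective f ∧ ∀ k, dist (f k) (q j) < 1 / ((m : ℝ) + 1) :=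
    fun m j => exists_pts _ _ (by positivity) K
  choose f hinj hf using hp
  refine ⟨fun m x k => f m (SimpleFunc.nearestPtInd q m x) k, fun m => ?_, fun m => ?_,
    fun x k => ?_⟩
  · have h1 : Measurable fun z : ℕ × Fin K => f m z.1 z.2 := Measurable.of_discrete
    exact h1.comp (((SimpleFunc.nearestPtInd q m).measurable.comp measurable_fst).prodMk
      measurable_snd)
  · have : ∀ᶠ δ in 𝓝[>] (0 : ℝ), ∀ (j : Fin (m + 1)) (k k' : Fin K), k ≠ k' →
        2 * δ ≤ dist (f m j k) (f m j k') := by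
      rw [eventually_all]; intro j
      rw [eventually_all]; intro k
      rw [eventually_all]; intro k'
      by_cases hk : k = k'
      · simp [hk]
      have hd : 0 < dist (f m j k) (f m j k') := dist_pos.2 fun h => hk (hinj m j h)
      filter_upwards [Ioo_mem_nhdsGT (half_pos hd)] with δ hδ _
      linarith [hδ.2]
    obtain ⟨δ, h, hδ⟩ := (this.and self_mem_nhdsWithin).exists
    exact ⟨δ, hδ, fun x k k' hk =>
      h ⟨_, Nat.lt_succ_of_le (SimpleFunc.nearestPtInd_le q m x)⟩ k k' hk⟩
  · have h1 : Tendsto (fun m => SimpleFunc.nearestPt q m x) atTop (𝓝 x) :=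
      SimpleFunc.tendsto_nearestPt ((TopologicalSpace.denseRange_denseSeq M) x)
    have h2 : Tendsto (fun m : ℕ => 1 / ((m : ℝ) + 1)) atTop (𝓝 0) :=
      tendsto_one_div_add_atTop_nhds_zero_nat
    refine (tendsto_iff_of_dist ?_).1 h1
    refine squeeze_zero (fun _ => dist_nonneg) (fun m => ?_) h2
    rw [dist_comm]
    exact (hf m _ _).le

end Aux3

/-- For the full shift on `ℤ → M` over a perfect Polish metric space `M`,
for every `L > 0` the set of ergodic invariant measures with `d̄_μ(x) ≥ L` for `μ`-a.e. `x`
(i.e. `dim_P^-(μ) ≥ L`) is dense in `M_e`. -/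
theorem fullShift_largePackingDim_dense {M : Type*} [MetricSpace M] [CompleteSpace M]
    [TopologicalSpace.SeparableSpace M] [PerfectSpace M]
    [MeasurableSpace M] [BorelSpace M] (L : ℝ) (hL : 0 < L) :
    Dense {μ : {ν : ProbabilityMeasure (ℤ → M) // Ergodic fullShift ν.toMeasure} |
        ∀ᵐ x ∂μ.1.toMeasure, ENNReal.ofReal L ≤ upperLocalDim shiftDist μ.1.toMeasure x} := by
  have : SecondCountableTopology M := UniformSpace.secondCountable_of_separable M
  intro μ
  have hprob : IsProbabilityMeasure μ.1.toMeasure := inferInstance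
  have hX : Nonempty (ℤ → M) := μ.1.nonempty
  have hM : Nonempty M := hX.map fun x => x 0
  obtain ⟨K, hK⟩ : ∃ K : ℕ, L ≤ Real.log K :=
    ((Real.tendsto_log_atTop.comp tendsto_natCast_atTop_atTop).eventually_ge_atTop L).exists
  have hK0 : NeZero K := ⟨by rintro rfl; simp at hK; linarith⟩
  obtain ⟨φ, hφ, hsep, hlim⟩ := exists_maps (M := M) K
  let Q := Measure.infinitePi (fun _ : ℤ => unif K)
  let m := μ.1.toMeasure.prod Q
  have hmp : ∀ n, MeasurePreserving (pert (φ n)) m (m.map (pert (φ n))) := fun n =>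
    ⟨measurable_pert (hφ n), rfl⟩
  have hpr : ∀ n, IsProbabilityMeasure (m.map (pert (φ n))) := fun n =>
    Measure.isProbabilityMeasure_map (measurable_pert (hφ n)).aemeasurable
  have herg : ∀ n, Ergodic fullShift (m.map (pert (φ n))) := fun n =>
    (hmp n).ergodic_of_ergodic_semiconj (ergodic_prod (unif K) μ.2) measurable_fullShift'
      (fun z => rfl)
  let ν : ℕ → {ν : ProbabilityMeasure (ℤ → M) // Ergodic fullShift ν.toMeasure} := fun n =>
    ⟨⟨m.map (pert (φ n)), hpr n⟩, herg n⟩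
  refine mem_closure_of_tendsto (f := ν) (b := atTop) ?_ (Eventually.of_forall fun n => ?_)
  · rw [tendsto_subtype_rng, ProbabilityMeasure.tendsto_iff_forall_integral_tendsto]
    intro g
    have e1 : ∀ n, ∫ ω, g ω ∂((ν n).1 : Measure (ℤ → M)) = ∫ z, g (pert (φ n) z) ∂m := fun n =>
      integral_map (measurable_pert (hφ n)).aemeasurable
        g.continuous.measurable.aestronglyMeasurable
    have e2 : ∫ ω, g ω ∂(μ.1 : Measure (ℤ → M)) = ∫ z, g z.1 ∂m := by
      have := (measurePreserving_fst (μ := μ.1.toMeasure) (ν := Q)).map_eq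
      conv_lhs => rw [← this]
      exact integral_map measurable_fst.aemeasurable
        g.continuous.measurable.aestronglyMeasurable
    simp only [e1]
    rw [e2]
    refine tendsto_integral_of_dominated_convergence (fun _ => ‖g‖) (fun n => ?_)
      (integrable_const _) (fun n => Eventually.of_forall fun z => g.norm_coe_le_norm _)
      (Eventually.of_forall fun z => ?_)
    · exact (g.continuous.measurable.comp (measurable_pert (hφ n))).aestronglyMeasurable
    · refine (g.continuous.tendsto _).comp ?_
      rw [tendsto_pi_nhds]
      exact fun i => hlim (z.1 i) (fun _ => z.2 i)
  · obtain ⟨δ, hδ, hs⟩ := hsep n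
    rw [mem_ofPred_eq]
    refine Eventually.of_forall fun y => ?_
    have := hpr n
    exact upperLocalDim_ge shiftDist (m.map (pert (φ n))) y L (δ / (1 + δ)) hL K hK
      (by positivity) (by rw [div_lt_one (by positivity)]; linarith)
      (fun k => pert_ball (hφ n) _ hδ hs y k)
end
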